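/- arXiv:2504.05723 — 5 statements merged into one kernel-verified Lean document; each statement's English description precedes it below -/
import Mathlib

section
/- (Weighted Crouzeix–Palencia bound.) Let W be an hpd n×n complex matrix, B an n×n complex matrix, and q a polynomial with complex coefficients. Then for every x ∈ ℂⁿ, ‖q(B) x‖_W ≤ (1 + √2) · (sup_{z ∈ FOV^W(B)} |q(z)|) · ‖x‖_W. -/
open Polynomial Matrix
open scoped ComplexOrder

/-- The `W`-field of values of a matrix `B`:
`FOV^W(B) = { ⟨Bz, z⟩_W / ⟨z, z⟩_W : z ≠ 0 }` where `⟨u, v⟩_W = vᴴ W u`. -/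
def fovW {n : ℕ} (W B : Matrix (Fin n) (Fin n) ℂ) : Set ℂ :=
  {c : ℂ | ∃ z : Fin n → ℂ, z ≠ 0 ∧
    c = (star z ⬝ᵥ (W *ᵥ (B *ᵥ z))) / (star z ⬝ᵥ (W *ᵥ z))}

namespace CP
open Complex MeasureTheory Set Filter Topology

/-- A smooth, convex, positively homogeneous, positive definite function on the plane. -/
structure SmoothGauge (F : ℂ → ℝ) (p : ℕ) : Prop where
  hp : p ≠ 0
  cd : ContDiff ℝ 1 F
  conv : ConvexOn ℝ univ F
  hom : ∀ (t : ℝ) (z : ℂ), 0 ≤ t → F (t * z) = t ^ p * F z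
  pos : ∀ z, z ≠ 0 → 0 < F z

/-- radial function of the unit level set -/
noncomputable def rad (F : ℂ → ℝ) (p : ℕ) (θ : ℝ) : ℝ := (F (exp (θ * I))) ^ (-(1 / (p : ℝ)))

/-- boundary curve -/
noncomputable def crv (F : ℂ → ℝ) (p : ℕ) (θ : ℝ) : ℂ := rad F p θ * exp (θ * I)

variable {F : ℂ → ℝ} {p : ℕ}

lemma SmoothGauge.zero (h : SmoothGauge F p) : F 0 = 0 := by
  have := h.hom 0 0 le_rfl
  simpa [h.hp] using this

lemma SmoothGauge.cont (h : SmoothGauge F p) : Continuous F := h.cd.continuous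

lemma SmoothGauge.nonneg (h : SmoothGauge F p) (z : ℂ) : 0 ≤ F z := by
  rcases eq_or_ne z 0 with rfl | hz
  · rw [h.zero]
  · exact (h.pos z hz).le

lemma SmoothGauge.expos (h : SmoothGauge F p) (θ : ℝ) : 0 < F (exp (θ * I)) :=
  h.pos _ (exp_ne_zero _)

lemma SmoothGauge.rad_pos (h : SmoothGauge F p) (θ : ℝ) : 0 < rad F p θ :=
  Real.rpow_pos_of_pos (h.expos θ) _

lemma SmoothGauge.F_crv (h : SmoothGauge F p) (θ : ℝ) : F (crv F p θ) = 1 := by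
  rw [crv, h.hom _ _ (h.rad_pos θ).le, rad, ← Real.rpow_natCast, ← Real.rpow_mul (h.expos θ).le]
  have : (p : ℝ) ≠ 0 := by exact_mod_cast h.hp
  rw [neg_mul, one_div, inv_mul_cancel₀ this, Real.rpow_neg_one, inv_mul_cancel₀ (h.expos θ).ne']

lemma SmoothGauge.crv_ne (h : SmoothGauge F p) (θ : ℝ) : crv F p θ ≠ 0 := by
  unfold crv
  exact mul_ne_zero (by exact_mod_cast (h.rad_pos θ).ne') (exp_ne_zero _)

lemma SmoothGauge.rad_cd (h : SmoothGauge F p) : ContDiff ℝ 1 (rad F p) := by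
  have h1 : ContDiff ℝ 1 (fun θ : ℝ => F (exp (θ * I))) := by
    apply h.cd.comp
    have : ContDiff ℝ 1 (fun θ : ℝ => (θ : ℂ) * I) := by
      exact (ofRealCLM.contDiff).mul contDiff_const
    exact this.cexp
  unfold rad
  exact h1.rpow_const_of_ne (fun θ => (h.expos θ).ne')

lemma SmoothGauge.crv_cd (h : SmoothGauge F p) : ContDiff ℝ 1 (crv F p) := by
  unfold crv
  have : ContDiff ℝ 1 (fun θ : ℝ => (θ : ℂ) * I) := (ofRealCLM.contDiff).mul contDiff_const
  exact (ofRealCLM.contDiff.comp h.rad_cd).mul this.cexp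

/-- derivative of the boundary curve -/
noncomputable def crv' (F : ℂ → ℝ) (p : ℕ) (θ : ℝ) : ℂ := deriv (crv F p) θ

lemma SmoothGauge.hasDeriv (h : SmoothGauge F p) (θ : ℝ) :
    HasDerivAt (crv F p) (crv' F p θ) θ :=
  (h.crv_cd.differentiable (by norm_num) θ).hasDerivAt

lemma SmoothGauge.cont' (h : SmoothGauge F p) : Continuous (crv' F p) :=
  h.crv_cd.continuous_deriv (le_refl _)

lemma SmoothGauge.contc (h : SmoothGauge F p) : Continuous (crv F p) := h.crv_cd.continuous

lemma SmoothGauge.crv'_eq (h : SmoothGauge F p) (θ : ℝ) :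
    crv' F p θ = ((deriv (rad F p) θ / rad F p θ : ℝ) + I) * crv F p θ := by
  have h1 : HasDerivAt (rad F p) (deriv (rad F p) θ) θ :=
    (h.rad_cd.differentiable (by norm_num) θ).hasDerivAt
  have h2 : HasDerivAt (fun θ : ℝ => exp ((θ : ℂ) * I)) (exp (θ * I) * I) θ := by
    have := ((hasDerivAt_id (θ : ℂ)).mul_const I).cexp.comp_ofReal
    simpa using this
  have h3 := (h1.ofReal_comp).mul h2
  have h4 := (h.hasDeriv θ).unique h3
  rw [h4, crv]
  have : (rad F p θ : ℂ) ≠ 0 := by exact_mod_cast (h.rad_pos θ).ne'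
  push_cast
  field_simp

lemma rad_periodic (θ : ℝ) : rad F p (θ + 2 * Real.pi) = rad F p θ := by
  unfold rad
  congr 2
  push_cast
  rw [add_mul, exp_add, exp_two_pi_mul_I, mul_one]

lemma crv_periodic : Function.Periodic (crv F p) (2 * Real.pi) := by
  intro θ
  unfold crv
  rw [rad_periodic]
  push_cast
  rw [add_mul, exp_add, exp_two_pi_mul_I, mul_one]

lemma crv'_periodic : Function.Periodic (crv' F p) (2 * Real.pi) := by
  intro θ
  unfold crv'
  rw [← deriv_comp_add_const]
  congr 1
  funext x
  exact crv_periodic x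

/-- every boundary point is on the curve -/
lemma SmoothGauge.surj (h : SmoothGauge F p) (z : ℂ) (hz : F z = 1) :
    ∃ θ, crv F p θ = z := by
  have hz0 : z ≠ 0 := by
    rintro rfl
    rw [h.zero] at hz
    norm_num at hz
  refine ⟨arg z, ?_⟩
  have e : ((‖z‖ : ℝ) : ℂ) * exp (arg z * I) = z := norm_mul_exp_arg_mul_I z
  have hn : 0 < ‖z‖ := norm_pos_iff.2 hz0
  have h1 : F z = ‖z‖ ^ p * F (exp (arg z * I)) := by
    conv_lhs => rw [← e]
    exact h.hom _ _ hn.le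
  have h2 := h.F_crv (arg z)
  rw [crv, h.hom _ _ (h.rad_pos _).le] at h2
  have h3 : rad F p (arg z) ^ p = ‖z‖ ^ p := by
    have := h.expos (arg z)
    rw [hz] at h1
    apply mul_right_cancel₀ this.ne'
    rw [h2, h1]
  have h4 : rad F p (arg z) = ‖z‖ :=
    (pow_left_inj₀ (h.rad_pos _).le hn.le h.hp).1 h3
  rw [crv, h4, e]

lemma SmoothGauge.inj (h : SmoothGauge F p) {θ θ₀ : ℝ} (h1 : θ₀ < θ) (h2 : θ < θ₀ + 2 * Real.pi) :
    crv F p θ ≠ crv F p θ₀ := by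
  intro he
  have e1 : ‖crv F p θ‖ = rad F p θ := by
    simp [crv, abs_of_pos (h.rad_pos θ)]
  have e2 : ‖crv F p θ₀‖ = rad F p θ₀ := by
    simp [crv, abs_of_pos (h.rad_pos θ₀)]
  have e3 : rad F p θ = rad F p θ₀ := by rw [← e1, ← e2, he]
  unfold crv at he
  rw [e3] at he
  have : (rad F p θ₀ : ℂ) ≠ 0 := by exact_mod_cast (h.rad_pos θ₀).ne'
  have he := mul_left_cancel₀ this he
  rw [exp_eq_exp_iff_exists_int] at he
  obtain ⟨n, hn⟩ := he
  have hn' : (θ : ℂ) = θ₀ + n * (2 * Real.pi) := by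
    apply mul_right_cancel₀ I_ne_zero
    rw [hn]; ring
  have hn'' : θ = θ₀ + n * (2 * Real.pi) := by exact_mod_cast hn'
  have hpi := Real.pi_pos
  have n1 : (0 : ℝ) < n := by
    by_contra hcon
    push Not at hcon
    nlinarith
  have n2 : (n : ℝ) < 1 := by
    by_contra hcon
    push Not at hcon
    nlinarith
  have n1' : 0 < n := by exact_mod_cast n1
  have n2' : n < 1 := by exact_mod_cast n2
  omega

lemma SmoothGauge.im_pos (h : SmoothGauge F p) (θ : ℝ) :
    0 < (crv' F p θ * (starRingEnd ℂ) (crv F p θ)).im := by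
  rw [h.crv'_eq, mul_assoc, mul_conj]
  have := normSq_pos.2 (h.crv_ne θ)
  simp [this]

lemma SmoothGauge.crv'_ne (h : SmoothGauge F p) (θ : ℝ) : crv' F p θ ≠ 0 := by
  intro h0
  have := h.im_pos θ
  simp [h0] at this

/-- supporting half-plane property -/
lemma SmoothGauge.half (h : SmoothGauge F p) (θ : ℝ) (w : ℂ) (hw : F w ≤ 1) :
    0 ≤ (crv' F p θ * (starRingEnd ℂ) (crv F p θ - w)).im := by
  set σ := crv F p θ
  set u := crv' F p θ
  set D := fderiv ℝ F σ
  have hD : HasFDerivAt F D σ := (h.cd.differentiable (by norm_num) σ).hasFDerivAt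
  -- derivative in tangent direction
  have d1 : D u = 0 := by
    have c1 : HasDerivAt (fun t => F (crv F p t)) (D u) θ :=
      HasFDerivAt.comp_hasDerivAt θ hD (h.hasDeriv θ)
    have c2 : (fun t => F (crv F p t)) = fun _ => 1 := by
      funext t; exact h.F_crv t
    rw [c2] at c1
    exact c1.unique (hasDerivAt_const _ _)
  -- convexity
  have d2 : D (w - σ) ≤ 0 := by
    have c1 : HasDerivAt (fun t : ℝ => F (σ + t * (w - σ))) (D (w - σ)) 0 := by
      have c0 : HasDerivAt (fun t : ℝ => σ + (t : ℂ) * (w - σ)) (w - σ) 0 := by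
        have := ((hasDerivAt_id (0:ℝ)).ofReal_comp.mul_const (w - σ)).const_add σ
        simpa using this
      have hD' : HasFDerivAt F D (σ + ((0 : ℝ) : ℂ) * (w - σ)) := by simpa using hD
      exact HasFDerivAt.comp_hasDerivAt (0 : ℝ) hD' c0
    by_contra hcon
    push Not at hcon
    have c2 := c1.tendsto_slope_zero_right
    have c3 : ∀ᶠ t : ℝ in 𝓝[>] 0, t⁻¹ • (F (σ + ((0 + t : ℝ) : ℂ) * (w - σ)) - F (σ + ((0 : ℝ) : ℂ) * (w - σ))) ≤ 0 := by
      have : Ioo (0:ℝ) 1 ∈ 𝓝[>] (0:ℝ) := Ioo_mem_nhdsGT one_pos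
      filter_upwards [this] with t ht
      have k1 : F (σ + ((0 : ℝ) : ℂ) * (w - σ)) = 1 := by
        simpa using h.F_crv θ
      have k2 : F (σ + ((0 + t : ℝ) : ℂ) * (w - σ)) ≤ 1 := by
        have := h.conv.2 (mem_univ σ) (mem_univ w) (sub_nonneg.2 ht.2.le) ht.1.le (by ring)
        have e : (1 - t) • σ + t • w = σ + ((0 + t : ℝ) : ℂ) * (w - σ) := by
          simp only [real_smul]; push_cast; ring
        rw [e] at this
        refine this.trans ?_
        have : F σ = 1 := h.F_crv θ
        rw [this, smul_eq_mul, smul_eq_mul]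
        nlinarith [ht.1]
      rw [k1, smul_eq_mul]
      exact mul_nonpos_of_nonneg_of_nonpos (inv_nonneg.2 ht.1.le) (by linarith)
    exact absurd (le_of_tendsto c2 c3) (not_le.2 hcon)
  have d3 : D σ = p := by
    have c1 : HasDerivAt (fun t : ℝ => F (t * σ)) (D σ) 1 := by
      have c0 : HasDerivAt (fun t : ℝ => (t : ℂ) * σ) σ 1 := by
        have := ((hasDerivAt_id (1:ℝ)).ofReal_comp.mul_const σ)
        simpa using this
      have hD' : HasFDerivAt F D (((1 : ℝ) : ℂ) * σ) := by simpa using hD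
      exact HasFDerivAt.comp_hasDerivAt (1 : ℝ) hD' c0
    have c2 : HasDerivAt (fun t : ℝ => t ^ p) (p : ℝ) 1 := by
      simpa using hasDerivAt_pow p (1 : ℝ)
    have c3 : (fun t : ℝ => F (t * σ)) =ᶠ[𝓝 1] fun t => t ^ p := by
      filter_upwards [lt_mem_nhds (zero_lt_one' ℝ)] with t ht
      rw [h.hom t σ ht.le, h.F_crv θ, mul_one]
    exact c1.unique (c2.congr_of_eventuallyEq c3)
  have hp : (0:ℝ) < p := by exact_mod_cast Nat.pos_of_ne_zero h.hp
  -- coordinates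
  have hDc : ∀ v : ℂ, D v = v.re * D 1 + v.im * D I := by
    intro v
    have : v = v.re • (1:ℂ) + v.im • I := by
      apply Complex.ext <;> simp
    conv_lhs => rw [this]
    rw [map_add, map_smul, map_smul, smul_eq_mul, smul_eq_mul]
  have hip := h.im_pos θ
  change 0 < (u * (starRingEnd ℂ) σ).im at hip
  rw [hDc] at d1 d2 d3
  simp only [mul_im, conj_re, conj_im, sub_re, sub_im] at *
  generalize D 1 = a at *
  generalize D I = b at *
  -- u = c * (-b, a), c > 0
  have hab : 0 < a ^ 2 + b ^ 2 := by
    by_contra hcon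
    have ha : a = 0 := by nlinarith [sq_nonneg a, sq_nonneg b]
    have hb : b = 0 := by nlinarith [sq_nonneg a, sq_nonneg b]
    rw [ha, hb] at d3
    simp at d3
    exact h.hp (by exact_mod_cast d3.symm)
  set c := (u.im * a - u.re * b) / (a ^ 2 + b ^ 2) with hc
  have ur : u.re = -c * b := by
    rw [hc]; field_simp; linear_combination a * d1
  have ui : u.im = c * a := by
    rw [hc]; field_simp; linear_combination b * d1
  have hcp : 0 < c := by
    rw [ur, ui] at hip
    have : c * p = -c * b * -σ.im + c * a * σ.re := by rw [← d3]; ring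
    rw [← this] at hip
    exact pos_of_mul_pos_left hip hp.le
  rw [ur, ui]
  have e : -c * b * -(σ.im - w.im) + c * a * (σ.re - w.re) = -(c * ((w.re - σ.re) * a + (w.im - σ.im) * b)) := by ring
  rw [e]
  nlinarith

/-- winding number one -/
lemma SmoothGauge.winding (h : SmoothGauge F p) (z : ℂ) (hz : F z < 1) :
    ∫ θ in (0:ℝ)..(2 * Real.pi), crv' F p θ / (crv F p θ - z) = 2 * Real.pi * I := by
  have hne : ∀ θ, crv F p θ - z ≠ 0 := by
    intro θ h0
    have := h.F_crv θ
    rw [sub_eq_zero.1 h0] at this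
    exact hz.ne this
  have hsl : ∀ θ, 1 - z / crv F p θ ∈ slitPlane := by
    intro θ
    by_contra hcon
    rw [mem_slitPlane_iff, not_or] at hcon
    push Not at hcon
    obtain ⟨h1, h2⟩ := hcon
    have e : z / crv F p θ = ((z / crv F p θ).re : ℝ) := by
      apply Complex.ext
      · simp
      · simpa using h2
    set t := (z / crv F p θ).re
    have ht : 1 ≤ t := by simpa using h1
    have ez : z = t * crv F p θ := by
      rw [← e, div_mul_cancel₀ _ (h.crv_ne θ)]
    rw [ez, h.hom _ _ (by linarith), h.F_crv, mul_one] at hz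
    exact absurd (one_le_pow₀ ht) (not_le.2 hz)
  set L : ℝ → ℂ := fun θ => log (1 - z / crv F p θ) + (Real.log (rad F p θ) : ℝ) + θ * I with hL
  have hd : ∀ θ ∈ uIcc (0:ℝ) (2 * Real.pi), HasDerivAt L (crv' F p θ / (crv F p θ - z)) θ := by
    intro θ _
    have a1 : HasDerivAt (fun t => 1 - z / crv F p t) (z * crv' F p θ / (crv F p θ)^2) θ := by
      have := ((hasDerivAt_const θ z).div (h.hasDeriv θ) (h.crv_ne θ)).const_sub 1
      refine this.congr_deriv ?_
      ring
    have a2 := a1.clog_real (hsl θ)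
    have a3 : HasDerivAt (fun t => ((Real.log (rad F p t) : ℝ) : ℂ))
        ((deriv (rad F p) θ / rad F p θ : ℝ) : ℂ) θ := by
      have h1 : HasDerivAt (rad F p) (deriv (rad F p) θ) θ :=
        (h.rad_cd.differentiable (by norm_num) θ).hasDerivAt
      exact (h1.log (h.rad_pos θ).ne').ofReal_comp
    have a4 : HasDerivAt (fun t : ℝ => (t : ℂ) * I) I θ := by
      simpa using ((hasDerivAt_id θ).ofReal_comp.mul_const I)
    have a5 := (a2.add a3).add a4
    refine a5.congr_deriv ?_
    have e := h.crv'_eq θ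
    have e' : ((deriv (rad F p) θ / rad F p θ : ℝ) : ℂ) = crv' F p θ / crv F p θ - I := by
      rw [e, mul_div_cancel_right₀ _ (h.crv_ne θ)]; ring
    rw [e']
    have n1 := h.crv_ne θ
    have n2 := hne θ
    have n3 : 1 - z / crv F p θ ≠ 0 := slitPlane_ne_zero (hsl θ)
    have e6 : 1 - z / crv F p θ = (crv F p θ - z) / crv F p θ := by field_simp
    rw [e6]
    field_simp
    ring
  rw [intervalIntegral.integral_eq_sub_of_hasDerivAt hd]
  · have k1 : crv F p (2 * Real.pi) = crv F p 0 := by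
      have := crv_periodic (F := F) (p := p) 0
      simpa using this
    have k2 : rad F p (2 * Real.pi) = rad F p 0 := by
      have := rad_periodic (F := F) (p := p) 0
      simpa using this
    simp only [hL, k1, k2]
    push_cast
    ring
  · apply Continuous.intervalIntegrable
    exact h.cont'.div (h.contc.sub continuous_const) hne

end CP

namespace CP
open Complex MeasureTheory Set Filter Topology

variable {F : ℂ → ℝ} {p : ℕ}

/-- Cauchy kernel along the curve -/
noncomputable def ker (F : ℂ → ℝ) (p : ℕ) (z : ℂ) (θ : ℝ) : ℂ := crv' F p θ / (crv F p θ - z)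

lemma SmoothGauge.sub_ne (h : SmoothGauge F p) {z : ℂ} (hz : F z < 1) (θ : ℝ) :
    crv F p θ - z ≠ 0 := by
  intro h0
  have := h.F_crv θ
  rw [sub_eq_zero.1 h0] at this
  exact hz.ne this

lemma SmoothGauge.ker_cont (h : SmoothGauge F p) {z : ℂ} (hz : F z < 1) :
    Continuous (ker F p z) :=
  h.cont'.div (h.contc.sub continuous_const) (h.sub_ne hz)

lemma ker_periodic (z : ℂ) : Function.Periodic (ker F p z) (2 * Real.pi) := by
  intro θ
  unfold ker
  rw [crv_periodic, crv'_periodic]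

lemma SmoothGauge.ker_im_nonneg (h : SmoothGauge F p) {z : ℂ} (hz : F z ≤ 1) (θ : ℝ) :
    0 ≤ (ker F p z θ).im := by
  have h1 := h.half θ z hz
  have : ker F p z θ = (crv' F p θ * (starRingEnd ℂ) (crv F p θ - z)) *
      ((normSq (crv F p θ - z))⁻¹ : ℝ) := by
    unfold ker
    rw [div_eq_mul_inv, inv_def, mul_assoc]
  rw [this, im_mul_ofReal]
  exact mul_nonneg h1 (inv_nonneg.2 (normSq_nonneg _))

lemma SmoothGauge.ker_integral (h : SmoothGauge F p) {z : ℂ} (hz : F z < 1) :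
    ∫ θ in (0:ℝ)..(2 * Real.pi), ker F p z θ = 2 * Real.pi * I := h.winding z hz

lemma SmoothGauge.cauchy (h : SmoothGauge F p) {s : ℝ} (hs : 1 < s) {f : ℂ → ℂ}
    (hf : DifferentiableOn ℂ f {z | F z < s}) {z : ℂ} (hz : F z < 1) :
    ∫ θ in (0:ℝ)..(2 * Real.pi), f (crv F p θ) * ker F p z θ = 2 * Real.pi * I * f z := by
  have hopen : IsOpen {z | F z < s} := isOpen_lt h.cont continuous_const
  have hconv : Convex ℝ {z | F z < s} := by
    simpa using h.conv.convex_lt s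
  have hzm : {z | F z < s} ∈ 𝓝 z := hopen.mem_nhds (hz.trans hs)
  have hk := (differentiableOn_dslope hzm).2 hf
  obtain ⟨G, hG⟩ := hconv.exists_forall_hasDerivWithinAt hk
  have hmem : ∀ θ, crv F p θ ∈ {z | F z < s} := by
    intro θ
    change F _ < s
    rw [h.F_crv]; exact hs
  have hd : ∀ θ ∈ uIcc (0:ℝ) (2 * Real.pi), HasDerivAt (fun t => G (crv F p t))
      (dslope f z (crv F p θ) * crv' F p θ) θ := by
    intro θ _
    exact HasDerivAt.comp θ ((hG _ (hmem θ)).hasDerivAt (hopen.mem_nhds (hmem θ))) (h.hasDeriv θ)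
  have hfc : Continuous (fun θ => f (crv F p θ)) :=
    hf.continuousOn.comp_continuous h.contc hmem
  have hkc : Continuous (fun θ => dslope f z (crv F p θ)) :=
    hk.continuousOn.comp_continuous h.contc hmem
  have h0 := intervalIntegral.integral_eq_sub_of_hasDerivAt hd
    ((hkc.mul h.cont').intervalIntegrable _ _)
  have k1 : crv F p (2 * Real.pi) = crv F p 0 := by
    have := crv_periodic (F := F) (p := p) 0
    simpa using this
  rw [k1, sub_self] at h0
  have e : ∀ θ, f (crv F p θ) * ker F p z θ =
      dslope f z (crv F p θ) * crv' F p θ + f z * ker F p z θ := by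
    intro θ
    have hne := h.sub_ne hz θ
    rw [dslope_of_ne _ (sub_ne_zero.1 hne), slope_def_field]
    unfold ker
    field_simp
    ring
  simp_rw [e]
  have i1 : IntervalIntegrable (fun θ => dslope f z (crv F p θ) * crv' F p θ) volume
    0 (2 * Real.pi) := (hkc.mul h.cont').intervalIntegrable _ _
  have i2 : IntervalIntegrable (fun θ => f z * ker F p z θ) volume
    0 (2 * Real.pi) := (continuous_const.mul (h.ker_cont hz)).intervalIntegrable _ _
  rw [intervalIntegral.integral_add i1 i2, h0,
    intervalIntegral.integral_const_mul, h.ker_integral hz]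
  ring

/-- Cauchy transform of the conjugate of boundary values. -/
noncomputable def gtr (F : ℂ → ℝ) (p : ℕ) (f : ℂ → ℂ) (z : ℂ) : ℂ :=
  (2 * Real.pi * I)⁻¹ * ∫ θ in (0:ℝ)..(2 * Real.pi), (starRingEnd ℂ) (f (crv F p θ)) * ker F p z θ

lemma SmoothGauge.gtr_diff (h : SmoothGauge F p) {f : ℂ → ℂ}
    (hf : Continuous fun θ => f (crv F p θ)) :
    DifferentiableOn ℂ (gtr F p f) {z | F z < 1} := by
  have hopen : IsOpen {z | F z < 1} := isOpen_lt h.cont continuous_const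
  intro z₀ hz₀
  apply DifferentiableAt.differentiableWithinAt
  unfold gtr
  apply DifferentiableAt.const_mul
  obtain ⟨ρ, hρ, hball⟩ := Metric.isOpen_iff.1 hopen z₀ hz₀
  have hφ : Continuous fun θ => (starRingEnd ℂ) (f (crv F p θ)) := continuous_conj.comp hf
  have hb2 : Metric.ball z₀ (ρ / 2) ⊆ {z | F z < 1} :=
    (Metric.ball_subset_ball (by linarith)).trans hball
  have hlow : ∀ z ∈ Metric.ball z₀ (ρ / 2), ∀ θ, ρ / 2 ≤ ‖crv F p θ - z‖ := by
    intro z hz θ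
    have h1 : ρ ≤ dist (crv F p θ) z₀ := by
      by_contra hcon
      push Not at hcon
      have : F (crv F p θ) < 1 := hball hcon
      rw [h.F_crv] at this
      exact lt_irrefl _ this
    have h2 := dist_triangle (crv F p θ) z z₀
    have h3 : dist z z₀ < ρ / 2 := hz
    rw [← dist_eq_norm]
    linarith
  have key := intervalIntegral.hasDerivAt_integral_of_dominated_loc_of_deriv_le
    (μ := volume) (a := 0) (b := 2 * Real.pi) (x₀ := z₀) (s := Metric.ball z₀ (ρ / 2))
    (F := fun z θ => (starRingEnd ℂ) (f (crv F p θ)) * ker F p z θ)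
    (F' := fun z θ => (starRingEnd ℂ) (f (crv F p θ)) * (crv' F p θ / (crv F p θ - z) ^ 2))
    (bound := fun θ => ‖(starRingEnd ℂ) (f (crv F p θ))‖ * (‖crv' F p θ‖ / (ρ / 2) ^ 2))
    (Metric.ball_mem_nhds z₀ (by positivity)) ?_ ?_ ?_ ?_ ?_ ?_
  · exact key.2.differentiableAt
  · filter_upwards [hopen.mem_nhds hz₀] with z hz
    exact (hφ.mul (h.ker_cont hz)).aestronglyMeasurable
  · exact (hφ.mul (h.ker_cont hz₀)).intervalIntegrable _ _
  · refine Continuous.aestronglyMeasurable ?_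
    exact hφ.mul (h.cont'.div ((h.contc.sub continuous_const).pow 2)
      fun θ => pow_ne_zero _ (h.sub_ne hz₀ θ))
  · refine ae_of_all _ fun θ _ z hz => ?_
    have := hlow z hz θ
    rw [norm_mul, norm_div, norm_pow]
    gcongr
  · apply Continuous.intervalIntegrable
    exact hφ.norm.mul (h.cont'.norm.div_const _)
  · refine ae_of_all _ fun θ _ z hz => ?_
    have hne := h.sub_ne (hb2 hz) θ
    unfold ker
    apply HasDerivAt.const_mul
    have := (hasDerivAt_const z (crv' F p θ)).div ((hasDerivAt_id z).const_sub (crv F p θ)) hne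
    refine this.congr_deriv ?_
    simp

lemma SmoothGauge.gtr_add (h : SmoothGauge F p) {s : ℝ} (hs : 1 < s) {f : ℂ → ℂ}
    (hf : DifferentiableOn ℂ f {z | F z < s}) {z : ℂ} (hz : F z < 1) :
    ∫ θ in (0:ℝ)..(2 * Real.pi), (starRingEnd ℂ) (f (crv F p θ)) * ((ker F p z θ).im : ℂ) =
      Real.pi * (gtr F p f z + (starRingEnd ℂ) (f z)) := by
  have hmem : ∀ θ, crv F p θ ∈ {z | F z < s} := by
    intro θ
    change F _ < s
    rw [h.F_crv]; exact hs
  have hfc : Continuous (fun θ => f (crv F p θ)) :=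
    hf.continuousOn.comp_continuous h.contc hmem
  have hφ : Continuous fun θ => (starRingEnd ℂ) (f (crv F p θ)) := continuous_conj.comp hfc
  have hk := h.ker_cont hz
  have e : ∀ θ, (starRingEnd ℂ) (f (crv F p θ)) * ((ker F p z θ).im : ℂ) =
      (2 * I)⁻¹ * ((starRingEnd ℂ) (f (crv F p θ)) * ker F p z θ
        - (starRingEnd ℂ) (f (crv F p θ) * ker F p z θ)) := by
    intro θ
    rw [im_eq_sub_conj, map_mul]
    field_simp
  simp_rw [e]
  have i1 : IntervalIntegrable (fun θ => (starRingEnd ℂ) (f (crv F p θ)) * ker F p z θ) volume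
    0 (2 * Real.pi) := (hφ.mul hk).intervalIntegrable _ _
  have i2 : IntervalIntegrable (fun θ => (starRingEnd ℂ) (f (crv F p θ) * ker F p z θ)) volume
    0 (2 * Real.pi) := (continuous_conj.comp (hfc.mul hk)).intervalIntegrable _ _
  rw [intervalIntegral.integral_const_mul, intervalIntegral.integral_sub i1 i2]
  have hc : ∫ θ in (0:ℝ)..(2 * Real.pi), (starRingEnd ℂ) (f (crv F p θ) * ker F p z θ) =
      (starRingEnd ℂ) (2 * Real.pi * I * f z) := by
    rw [← h.cauchy hs hf hz]
    have := ContinuousLinearMap.intervalIntegral_comp_comm (μ := volume) (a := 0)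
      (b := 2 * Real.pi) (f := fun θ => f (crv F p θ) * ker F p z θ)
      (conjCLE : ℂ →L[ℝ] ℂ) ((hfc.mul hk).intervalIntegrable _ _)
    simpa using this
  rw [hc]
  unfold gtr
  have hpi : (Real.pi : ℂ) ≠ 0 := by exact_mod_cast Real.pi_ne_zero
  have hI := I_ne_zero
  simp only [map_mul, conj_I, conj_ofReal, map_ofNat]
  field_simp
  ring

/-- half of the boundary seen from a boundary point -/
lemma SmoothGauge.comp_bound (h : SmoothGauge F p) (θ₀ : ℝ) {α : ℝ} (hα : 0 < α)
    (hα' : α < Real.pi) :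
    ∫ θ in (θ₀ + α)..(θ₀ + 2 * Real.pi - α), (ker F p (crv F p θ₀) θ).im ≤ Real.pi := by
  set u := crv' F p θ₀
  set σ₀ := crv F p θ₀
  have hu : u ≠ 0 := h.crv'_ne θ₀
  have hle : θ₀ + α ≤ θ₀ + 2 * Real.pi - α := by linarith
  have hne : ∀ θ ∈ Icc (θ₀ + α) (θ₀ + 2 * Real.pi - α), crv F p θ - σ₀ ≠ 0 := by
    intro θ hθ
    exact sub_ne_zero.2 (h.inj (by linarith [hθ.1]) (by linarith [hθ.2]))
  have hre : ∀ θ, 0 ≤ (-I * (crv F p θ - σ₀) / u).re := by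
    intro θ
    have h1 := h.half θ₀ (crv F p θ) (h.F_crv θ).le
    change 0 ≤ (u * (starRingEnd ℂ) (σ₀ - crv F p θ)).im at h1
    have : -I * (crv F p θ - σ₀) / u =
        (-I * (crv F p θ - σ₀) * (starRingEnd ℂ) u) * ((normSq u)⁻¹ : ℝ) := by
      rw [div_eq_mul_inv, inv_def, mul_assoc, mul_assoc, mul_assoc]
    rw [this, re_mul_ofReal]
    apply mul_nonneg _ (inv_nonneg.2 (normSq_nonneg _))
    have e2 : (-I * (crv F p θ - σ₀) * (starRingEnd ℂ) u).re =
        (u * (starRingEnd ℂ) (σ₀ - crv F p θ)).im := by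
      simp only [mul_re, mul_im, neg_re, neg_im, I_re, I_im, conj_re, conj_im, sub_re, sub_im]
      ring
    rw [e2]
    exact h1
  have hsl : ∀ θ ∈ Icc (θ₀ + α) (θ₀ + 2 * Real.pi - α), -I * (crv F p θ - σ₀) / u ∈ slitPlane := by
    intro θ hθ
    rw [mem_slitPlane_iff_not_le_zero]
    intro hcon
    have hz : -I * (crv F p θ - σ₀) / u ≠ 0 :=
      div_ne_zero (mul_ne_zero (neg_ne_zero.2 I_ne_zero) (hne θ hθ)) hu
    rw [Complex.le_def] at hcon
    apply hz
    apply Complex.ext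
    · exact le_antisymm hcon.1 (hre θ)
    · exact hcon.2
  have hd : ∀ θ ∈ uIcc (θ₀ + α) (θ₀ + 2 * Real.pi - α),
      HasDerivAt (fun t => (log (-I * (crv F p t - σ₀) / u)).im) (ker F p σ₀ θ).im θ := by
    intro θ hθ
    rw [uIcc_of_le hle] at hθ
    have a1 : HasDerivAt (fun t => -I * (crv F p t - σ₀) / u) (-I * crv' F p θ / u) θ :=
      (((h.hasDeriv θ).sub_const σ₀).const_mul (-I)).div_const u
    have a2 := a1.clog_real (hsl θ hθ)
    have a3 : HasDerivAt (fun t => log (-I * (crv F p t - σ₀) / u)) (ker F p σ₀ θ) θ := by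
      refine a2.congr_deriv ?_
      have := hne θ hθ
      unfold ker
      have hI := I_ne_zero
      field_simp
    exact imCLM.hasFDerivAt.comp_hasDerivAt θ a3
  rw [intervalIntegral.integral_eq_sub_of_hasDerivAt hd]
  · have b : ∀ θ, |(log (-I * (crv F p θ - σ₀) / u)).im| ≤ Real.pi / 2 := by
      intro θ
      rw [log_im]
      exact abs_arg_le_pi_div_two_iff.2 (hre θ)
    have b1 := abs_le.1 (b (θ₀ + 2 * Real.pi - α))
    have b2 := abs_le.1 (b (θ₀ + α))
    linarith [b1.2, b2.1]
  · apply ContinuousOn.intervalIntegrable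
    rw [uIcc_of_le hle]
    unfold ker
    exact continuous_im.comp_continuousOn (h.cont'.continuousOn.div
      (h.contc.continuousOn.sub continuousOn_const) hne)

lemma SmoothGauge.comp_cont (h : SmoothGauge F p) (θ₀ : ℝ) {α : ℝ} (hα : 0 < α)
    (hα' : α < Real.pi) :
    ContinuousAt (fun z => ∫ θ in (θ₀ + α)..(θ₀ + 2 * Real.pi - α), (ker F p z θ).im)
      (crv F p θ₀) := by
  set σ₀ := crv F p θ₀
  have hle : θ₀ + α ≤ θ₀ + 2 * Real.pi - α := by linarith
  have hne : ∀ θ ∈ Icc (θ₀ + α) (θ₀ + 2 * Real.pi - α), crv F p θ - σ₀ ≠ 0 := by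
    intro θ hθ
    exact sub_ne_zero.2 (h.inj (by linarith [hθ.1]) (by linarith [hθ.2]))
  obtain ⟨θ₁, hθ₁, hmin⟩ := (isCompact_Icc (a := θ₀ + α) (b := θ₀ + 2 * Real.pi - α)).exists_isMinOn
    (nonempty_Icc.2 hle) ((h.contc.sub continuous_const).norm.continuousOn (f := fun θ => ‖crv F p θ - σ₀‖))
  set ρ := ‖crv F p θ₁ - σ₀‖
  have hρ : 0 < ρ := norm_pos_iff.2 (hne θ₁ hθ₁)
  have hlow : ∀ z ∈ Metric.ball σ₀ (ρ / 2), ∀ θ ∈ Icc (θ₀ + α) (θ₀ + 2 * Real.pi - α),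
      ρ / 2 ≤ ‖crv F p θ - z‖ := by
    intro z hz θ hθ
    have h1 : ρ ≤ ‖crv F p θ - σ₀‖ := hmin hθ
    rw [← dist_eq_norm] at h1 ⊢
    have h2 := dist_triangle (crv F p θ) z σ₀
    have h3 : dist z σ₀ < ρ / 2 := hz
    linarith
  have hb : Metric.ball σ₀ (ρ / 2) ∈ 𝓝 σ₀ := Metric.ball_mem_nhds _ (by positivity)
  have hsub : uIoc (θ₀ + α) (θ₀ + 2 * Real.pi - α) ⊆ Icc (θ₀ + α) (θ₀ + 2 * Real.pi - α) := by
    rw [uIoc_of_le hle]; exact Ioc_subset_Icc_self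
  apply intervalIntegral.continuousAt_of_dominated_interval
    (bound := fun θ => ‖crv' F p θ‖ / (ρ / 2))
  · filter_upwards [hb] with z hz
    apply ContinuousOn.aestronglyMeasurable _ measurableSet_uIoc
    refine ContinuousOn.mono ?_ hsub
    unfold ker
    refine continuous_im.comp_continuousOn (h.cont'.continuousOn.div
      (h.contc.continuousOn.sub continuousOn_const) ?_)
    intro θ hθ h0
    have := hlow z hz θ hθ
    rw [h0, norm_zero] at this
    linarith
  · filter_upwards [hb] with z hz
    refine ae_of_all _ fun θ hθ => ?_
    have := hlow z hz θ (hsub hθ)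
    refine (abs_im_le_norm _).trans ?_
    unfold ker
    rw [norm_div]
    gcongr
  · exact (h.cont'.norm.div_const _).intervalIntegrable _ _
  · refine ae_of_all _ fun θ hθ => ?_
    unfold ker
    exact continuous_im.continuousAt.comp (continuousAt_const.div (continuousAt_const.sub continuousAt_id)
      (hne θ (hsub hθ)))

end CP

namespace CP
open Complex MeasureTheory Set Filter Topology

variable {F : ℂ → ℝ} {p : ℕ}

lemma SmoothGauge.ker_im_integral (h : SmoothGauge F p) {z : ℂ} (hz : F z < 1) :
    ∫ θ in (0:ℝ)..(2 * Real.pi), (ker F p z θ).im = 2 * Real.pi := by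
  have := ContinuousLinearMap.intervalIntegral_comp_comm (μ := volume) (a := 0)
      (b := 2 * Real.pi) (f := fun θ => ker F p z θ) imCLM ((h.ker_cont hz).intervalIntegrable _ _)
  simp only [imCLM_apply] at this
  rw [this, h.ker_integral hz]
  simp

lemma SmoothGauge.gtr_near (h : SmoothGauge F p) {s : ℝ} (hs : 1 < s) {f : ℂ → ℂ}
    (hf : DifferentiableOn ℂ f {z | F z < s}) (hf1 : ∀ z, F z ≤ 1 → ‖f z‖ ≤ 1)
    {ε : ℝ} (hε : 0 < ε) (θ₀ : ℝ) :
    ∀ᶠ z in 𝓝 (crv F p θ₀), F z < 1 → ‖gtr F p f z‖ ≤ 1 + ε := by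
  have hopen : IsOpen {z | F z < s} := isOpen_lt h.cont continuous_const
  have hmem : ∀ θ, crv F p θ ∈ {z | F z < s} := by
    intro θ
    change F _ < s
    rw [h.F_crv]; exact hs
  have hfc : Continuous (fun θ => f (crv F p θ)) :=
    hf.continuousOn.comp_continuous h.contc hmem
  have hφ : Continuous fun θ => (starRingEnd ℂ) (f (crv F p θ)) := continuous_conj.comp hfc
  have hpi := Real.pi_pos
  -- choose the arc
  obtain ⟨β, hβ, hβ'⟩ := Metric.continuous_iff.1 hfc θ₀ (ε / 8) (by positivity)
  set α := min (β / 2) (Real.pi / 2) with hαdef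
  have hα : 0 < α := lt_min (by positivity) (by positivity)
  have hα1 : α < β := (min_le_left _ _).trans_lt (by linarith)
  have hα2 : α < Real.pi := (min_le_right _ _).trans_lt (by linarith)
  have harc : ∀ θ ∈ Icc (θ₀ - α) (θ₀ + α), ‖f (crv F p θ) - f (crv F p θ₀)‖ ≤ ε / 8 := by
    intro θ hθ
    rw [← dist_eq_norm]
    refine (hβ' θ ?_).le
    rw [Real.dist_eq]
    exact (abs_le.2 ⟨by linarith [hθ.1], by linarith [hθ.2]⟩).trans_lt hα1
  have hC := (h.comp_cont θ₀ hα hα2).eventually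
    (gt_mem_nhds (lt_of_le_of_lt (h.comp_bound θ₀ hα hα2)
      (show Real.pi < Real.pi + Real.pi * ε / 4 by linarith [mul_pos hpi hε])))
  have hfz : ∀ᶠ z in 𝓝 (crv F p θ₀), dist (f z) (f (crv F p θ₀)) < ε / 8 := by
    have : ContinuousAt f (crv F p θ₀) :=
      (hf.differentiableAt (hopen.mem_nhds (hmem θ₀))).continuousAt
    exact this.eventually (Metric.ball_mem_nhds _ (by positivity))
  filter_upwards [hC, hfz] with z hCz hfz hz
  set m : ℝ → ℝ := fun θ => (ker F p z θ).im with hm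
  have hmc : Continuous m := continuous_im.comp (h.ker_cont hz)
  have hm0 : ∀ θ, 0 ≤ m θ := h.ker_im_nonneg hz.le
  have hmper : Function.Periodic m (2 * Real.pi) := by
    intro θ
    simp only [hm]
    rw [ker_periodic]
  set A := ∫ θ in (θ₀ - α)..(θ₀ + α), m θ with hA
  set C := ∫ θ in (θ₀ + α)..(θ₀ + 2 * Real.pi - α), m θ with hCdef
  have hAC : A + C = 2 * Real.pi := by
    rw [hA, hCdef, intervalIntegral.integral_add_adjacent_intervals
      (hmc.intervalIntegrable _ _) (hmc.intervalIntegrable _ _)]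
    have := hmper.intervalIntegral_add_eq (θ₀ - α) 0
    rw [zero_add] at this
    refine Eq.trans ?_ (this.trans (h.ker_im_integral hz))
    congr 1
    ring
  set ψ : ℝ → ℂ := fun θ => (starRingEnd ℂ) (f (crv F p θ)) with hψ
  set w := (starRingEnd ℂ) (f z) with hw
  have hwn : ‖w‖ ≤ 1 := by
    rw [hw, RCLike.norm_conj]; exact hf1 z hz.le
  have hmcc : Continuous fun θ => ((m θ : ℝ) : ℂ) := continuous_ofReal.comp hmc
  have hInt : Continuous fun θ => ψ θ * (m θ : ℂ) := hφ.mul hmcc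
  have hper2 : Function.Periodic (fun θ => ψ θ * (m θ : ℂ)) (2 * Real.pi) := by
    intro θ
    simp only [hψ]
    rw [hmper, crv_periodic]
  have hid : (∫ θ in (θ₀ - α)..(θ₀ + α), ψ θ * (m θ : ℂ)) +
      ∫ θ in (θ₀ + α)..(θ₀ + 2 * Real.pi - α), ψ θ * (m θ : ℂ) = Real.pi * (gtr F p f z + w) := by
    rw [intervalIntegral.integral_add_adjacent_intervals
      (hInt.intervalIntegrable _ _) (hInt.intervalIntegrable _ _), ← h.gtr_add hs hf hz]
    have := hper2.intervalIntegral_add_eq (θ₀ - α) 0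
    rw [zero_add] at this
    change _ = ∫ θ in (0:ℝ)..(2 * Real.pi), ψ θ * (m θ : ℂ)
    rw [← this]
    congr 1
    ring
  have hid2 : ∫ θ in (θ₀ - α)..(θ₀ + α), ψ θ * (m θ : ℂ) =
      (∫ θ in (θ₀ - α)..(θ₀ + α), (ψ θ - w) * (m θ : ℂ)) + w * A := by
    have i1 : IntervalIntegrable (fun θ => (ψ θ - w) * (m θ : ℂ)) volume (θ₀ - α) (θ₀ + α) :=
      ((hφ.sub continuous_const).mul hmcc).intervalIntegrable _ _
    have i2 : IntervalIntegrable (fun θ => w * (m θ : ℂ)) volume (θ₀ - α) (θ₀ + α) :=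
      (continuous_const.mul hmcc).intervalIntegrable _ _
    have e : (w * A : ℂ) = ∫ θ in (θ₀ - α)..(θ₀ + α), w * (m θ : ℂ) := by
      rw [intervalIntegral.integral_const_mul, intervalIntegral.integral_ofReal]
    rw [e, ← intervalIntegral.integral_add i1 i2]
    congr 1
    funext θ
    ring
  have n1 : ‖∫ θ in (θ₀ - α)..(θ₀ + α), (ψ θ - w) * (m θ : ℂ)‖ ≤ (ε / 4) * A := by
    rw [hA, ← intervalIntegral.integral_const_mul]
    apply intervalIntegral.norm_integral_le_of_norm_le (by linarith)
    · refine ae_of_all _ fun θ hθ => ?_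
      rw [norm_mul, norm_real, Real.norm_of_nonneg (hm0 θ)]
      refine mul_le_mul_of_nonneg_right ?_ (hm0 θ)
      rw [hψ, hw, ← map_sub, RCLike.norm_conj]
      have a1 := harc θ (Ioc_subset_Icc_self hθ)
      rw [← dist_eq_norm] at a1 ⊢
      have := dist_triangle_right (f (crv F p θ)) (f z) (f (crv F p θ₀))
      linarith
    · exact (continuous_const.mul hmc).intervalIntegrable _ _
  have n2 : ‖∫ θ in (θ₀ + α)..(θ₀ + 2 * Real.pi - α), ψ θ * (m θ : ℂ)‖ ≤ C := by
    rw [hCdef]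
    apply intervalIntegral.norm_integral_le_of_norm_le (by linarith)
    · refine ae_of_all _ fun θ hθ => ?_
      rw [norm_mul, norm_real, Real.norm_of_nonneg (hm0 θ)]
      refine mul_le_of_le_one_left (hm0 θ) ?_
      rw [hψ, RCLike.norm_conj]
      exact hf1 _ (h.F_crv θ).le
    · exact hmc.intervalIntegrable _ _
  have hCz' : C < Real.pi + Real.pi * ε / 4 := hCz
  have hC0 : 0 ≤ C := intervalIntegral.integral_nonneg (by linarith) fun θ _ => hm0 θ
  have fin : (Real.pi : ℂ) * gtr F p f z =
      (∫ θ in (θ₀ - α)..(θ₀ + α), (ψ θ - w) * (m θ : ℂ)) + w * ((A - Real.pi : ℝ) : ℂ) +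
      ∫ θ in (θ₀ + α)..(θ₀ + 2 * Real.pi - α), ψ θ * (m θ : ℂ) := by
    rw [hid2] at hid
    push_cast
    linear_combination -hid
  have fin2 : Real.pi * ‖gtr F p f z‖ ≤ (ε / 4) * A + |A - Real.pi| + C := by
    have : Real.pi * ‖gtr F p f z‖ = ‖(Real.pi : ℂ) * gtr F p f z‖ := by
      rw [norm_mul, norm_real, Real.norm_of_nonneg hpi.le]
    rw [this, fin]
    refine (norm_add₃_le).trans ?_
    have n3 : ‖w * ((A - Real.pi : ℝ) : ℂ)‖ ≤ |A - Real.pi| := by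
      rw [norm_mul, norm_real, Real.norm_eq_abs]
      exact mul_le_of_le_one_left (abs_nonneg _) hwn
    gcongr
  have hA2 : A ≤ 2 * Real.pi := by linarith
  have habs : |A - Real.pi| ≤ A - Real.pi + 2 * (Real.pi * ε / 4) := by
    rw [abs_le]
    have : 0 ≤ Real.pi * ε := by positivity
    constructor <;> linarith
  have : Real.pi * ‖gtr F p f z‖ ≤ Real.pi * (1 + ε) := by
    have : (ε / 4) * A ≤ (ε / 4) * (2 * Real.pi) := by gcongr
    nlinarith
  exact le_of_mul_le_mul_left this hpi

lemma SmoothGauge.compact (h : SmoothGauge F p) : IsCompact {z | F z ≤ 1} := by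
  have himg : {z | F z ≤ 1} ⊆
      (fun q : ℝ × ℝ => (q.1 : ℂ) * crv F p q.2) '' (Icc 0 1 ×ˢ Icc (-Real.pi) Real.pi) := by
    intro z hz
    rcases eq_or_ne z 0 with rfl | hz0
    · exact ⟨(0, 0), by simp [Real.pi_pos.le], by simp⟩
    · set θ := arg z
      have e : ((‖z‖ : ℝ) : ℂ) * exp (θ * I) = z := norm_mul_exp_arg_mul_I z
      have hr := h.rad_pos θ
      have e2 : ((‖z‖ / rad F p θ : ℝ) : ℂ) * crv F p θ = z := by
        have : (rad F p θ : ℂ) ≠ 0 := by exact_mod_cast hr.ne'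
        rw [crv]
        conv_rhs => rw [← e]
        push_cast
        field_simp
      have ht : 0 ≤ ‖z‖ / rad F p θ := by positivity
      have hF : F z = (‖z‖ / rad F p θ) ^ p := by
        conv_lhs => rw [← e2]
        rw [h.hom _ _ ht, h.F_crv, mul_one]
      have ht1 : ‖z‖ / rad F p θ ≤ 1 := by
        by_contra hcon
        push Not at hcon
        have := one_lt_pow₀ hcon h.hp
        rw [← hF] at this
        exact absurd hz (not_le.2 this)
      exact ⟨(‖z‖ / rad F p θ, θ), ⟨⟨ht, ht1⟩, (neg_pi_lt_arg z).le, arg_le_pi z⟩, e2⟩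
  refine IsCompact.of_isClosed_subset ?_ (isClosed_le h.cont continuous_const) himg
  apply (isCompact_Icc.prod isCompact_Icc).image
  exact (continuous_ofReal.comp continuous_fst).mul (h.contc.comp continuous_snd)

lemma SmoothGauge.gtr_le (h : SmoothGauge F p) {s : ℝ} (hs : 1 < s) {f : ℂ → ℂ}
    (hf : DifferentiableOn ℂ f {z | F z < s}) (hf1 : ∀ z, F z ≤ 1 → ‖f z‖ ≤ 1)
    {z : ℂ} (hz : F z < 1) : ‖gtr F p f z‖ ≤ 1 := by
  have hmem : ∀ θ, crv F p θ ∈ {z | F z < s} := by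
    intro θ
    change F _ < s
    rw [h.F_crv]; exact hs
  have hfc : Continuous (fun θ => f (crv F p θ)) :=
    hf.continuousOn.comp_continuous h.contc hmem
  have hg := h.gtr_diff hfc
  apply le_of_forall_pos_le_add
  intro ε hε
  set V := {z | ∀ᶠ w in 𝓝 z, F w < 1 → ‖gtr F p f w‖ ≤ 1 + ε} with hV
  have hVo : IsOpen V := isOpen_setOfPred_eventually_nhds
  have hbd : ∀ w, F w = 1 → w ∈ V := by
    intro w hw
    obtain ⟨θ, rfl⟩ := h.surj w hw
    exact h.gtr_near hs hf hf1 hε θ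
  have hK : IsCompact ({z | F z ≤ 1} \ V) := h.compact.diff hVo
  obtain ⟨c, hc1, hc⟩ : ∃ c < 1, ∀ w ∈ {z | F z ≤ 1} \ V, F w ≤ c := by
    rcases ({z | F z ≤ 1} \ V).eq_empty_or_nonempty with he | hne
    · exact ⟨0, one_pos, by rw [he]; simp⟩
    · obtain ⟨w, hw, hmax⟩ := hK.exists_isMaxOn hne h.cont.continuousOn
      refine ⟨F w, lt_of_le_of_ne hw.1 fun h1 => hw.2 (hbd w h1), fun v hv => hmax hv⟩
  obtain ⟨t, ht1, ht2⟩ := exists_between (max_lt hc1 hz)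
  have htc : c < t := (le_max_left _ _).trans_lt ht1
  have htz : F z < t := (le_max_right _ _).trans_lt ht1
  have hcl : closure {w | F w < t} ⊆ {w | F w ≤ t} :=
    closure_minimal (fun w (hw : F w < t) => hw.le) (isClosed_le h.cont continuous_const)
  refine norm_le_of_forall_mem_frontier_norm_le (U := {w | F w < t}) ?_ ?_ ?_
    (subset_closure htz)
  · exact h.compact.isBounded.subset fun w (hw : F w < t) => (hw.trans ht2).le
  · apply DifferentiableOn.diffContOnCl
    exact hg.mono (hcl.trans fun w (hw : F w ≤ t) => lt_of_le_of_lt hw ht2)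
  · intro w hw
    have hw' : F w = t := frontier_lt_subset_eq h.cont continuous_const hw
    have hwV : w ∈ V := by
      by_contra hcon
      have := hc w ⟨by change F w ≤ 1; linarith, hcon⟩
      linarith
    exact (Eventually.self_of_nhds hwV) (by linarith)

end CP

namespace CP
set_option linter.unusedSectionVars false
set_option linter.unusedSimpArgs false
open Complex MeasureTheory Set Filter Topology

variable {F : ℂ → ℝ} {p : ℕ}
variable {E : Type*} [NormedAddCommGroup E] [InnerProductSpace ℂ E] [CompleteSpace E]
variable {ι : Type*} [Fintype ι] [DecidableEq ι]

/-- functional calculus of a diagonalizable operator -/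
noncomputable def Phi (P : ι → E →L[ℂ] E) (lam : ι → ℂ) (f : ℂ → ℂ) : E →L[ℂ] E :=
  ∑ i, f (lam i) • P i

/-- spectral resolution -/
structure SpecRes (P : ι → E →L[ℂ] E) (lam : ι → ℂ) (T : E →L[ℂ] E) : Prop where
  mul : ∀ i j, P i * P j = if i = j then P i else 0
  sum : ∑ i, P i = 1
  eq : T = ∑ i, lam i • P i

variable {P : ι → E →L[ℂ] E} {lam : ι → ℂ} {T : E →L[ℂ] E}

lemma SpecRes.phi_mul (hs : SpecRes P lam T) (f g : ℂ → ℂ) :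
    Phi P lam (fun z => f z * g z) = Phi P lam f * Phi P lam g := by
  unfold Phi
  rw [Finset.sum_mul_sum]
  refine Finset.sum_congr rfl fun i _ => ?_
  simp [hs.mul, smul_smul, mul_comm]

lemma phi_inner (f : ℂ → ℂ) (x y : E) :
    inner ℂ y (Phi P lam f x) = ∑ i, f (lam i) * inner ℂ y (P i x) := by
  unfold Phi
  simp [_root_.sum_apply, inner_sum, inner_smul_right]

lemma phi_norm (f : ℂ → ℂ) (hf : ∀ i, ‖f (lam i)‖ ≤ 1) :
    ‖Phi P lam f‖ ≤ ∑ i, ‖P i‖ := by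
  unfold Phi
  refine (norm_sum_le _ _).trans (Finset.sum_le_sum fun i _ => ?_)
  rw [norm_smul]
  exact mul_le_of_le_one_left (norm_nonneg _) (hf i)

lemma SpecRes.pos (hs : SpecRes P lam T) (h : SmoothGauge F p) (hl : ∀ i, F (lam i) < 1)
    (hW : ∀ x : E, x ≠ 0 → F (inner ℂ x (T x) / (‖x‖ : ℂ) ^ 2) ≤ 1) (θ : ℝ) (x : E) :
    0 ≤ (inner ℂ x (Phi P lam (fun z => ker F p z θ) x)).im := by
  set σ := crv F p θ
  set y := Phi P lam (fun z => (σ - z)⁻¹) x with hy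
  have hK : Phi P lam (fun z => ker F p z θ) x = crv' F p θ • y := by
    rw [hy]
    simp only [Phi, _root_.sum_apply, Finset.smul_sum]
    refine Finset.sum_congr rfl fun i _ => ?_
    simp [ker, div_eq_mul_inv, mul_smul, σ]
  have hx : x = σ • y - T y := by
    have e1 : Phi P lam (fun z => (σ - z) * (σ - z)⁻¹) = 1 := by
      rw [← hs.sum]
      unfold Phi
      refine Finset.sum_congr rfl fun i _ => ?_
      change ((σ - lam i) * (σ - lam i)⁻¹) • P i = P i
      rw [mul_inv_cancel₀ (h.sub_ne (hl i) θ), one_smul]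
    have e2 : Phi P lam (fun z => σ - z) = σ • 1 - T := by
      rw [hs.eq, ← hs.sum]
      unfold Phi
      rw [Finset.smul_sum, ← Finset.sum_sub_distrib]
      refine Finset.sum_congr rfl fun i _ => ?_
      rw [sub_smul]
    rw [hs.phi_mul, e2] at e1
    have := congrArg (fun A : E →L[ℂ] E => A x) e1
    simpa using this.symm
  rw [hK, inner_smul_right]
  rcases eq_or_ne y 0 with hy0 | hy0
  · simp [hy0]
  · set w := inner ℂ y (T y) / (‖y‖ : ℂ) ^ 2 with hw
    have hn : (‖y‖ : ℂ) ^ 2 ≠ 0 := by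
      have : ‖y‖ ≠ 0 := norm_ne_zero_iff.2 hy0
      exact pow_ne_zero _ (by exact_mod_cast this)
    have e3 : inner ℂ x y = (starRingEnd ℂ) (σ - w) * ((‖y‖ ^ 2 : ℝ) : ℂ) := by
      rw [← inner_conj_symm x y]
      have : inner ℂ y x = (σ - w) * ((‖y‖ ^ 2 : ℝ) : ℂ) := by
        have hx' : inner ℂ y x = inner ℂ y (σ • y - T y) := congrArg _ hx
        rw [hx', inner_sub_right, inner_smul_right, inner_self_eq_norm_sq_to_K, hw]
        push_cast
        rw [sub_mul, div_mul_cancel₀ _ hn]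
        rfl
      rw [this, map_mul, conj_ofReal]
    rw [e3, ← mul_assoc, im_mul_ofReal]
    exact mul_nonneg (h.half θ w (hW y hy0)) (by positivity)

lemma SpecRes.sesq (hs : SpecRes P lam T) (h : SmoothGauge F p) (hl : ∀ i, F (lam i) < 1)
    (hW : ∀ x : E, x ≠ 0 → F (inner ℂ x (T x) / (‖x‖ : ℂ) ^ 2) ≤ 1) (θ : ℝ) (x y : E) :
    ‖inner ℂ y (Phi P lam (fun z => ker F p z θ) x) -
      (starRingEnd ℂ) (inner ℂ x (Phi P lam (fun z => ker F p z θ) y))‖ ≤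
    (inner ℂ x (Phi P lam (fun z => ker F p z θ) x)).im +
      (inner ℂ y (Phi P lam (fun z => ker F p z θ) y)).im := by
  set K := Phi P lam (fun z => ker F p z θ) with hK
  set d := inner ℂ y (K x) - (starRingEnd ℂ) (inner ℂ x (K y)) with hd
  rcases eq_or_ne d 0 with h0 | h0
  · rw [h0, norm_zero]
    exact add_nonneg (hs.pos h hl hW θ x) (hs.pos h hl hW θ y)
  · have hn : (‖d‖ : ℂ) ≠ 0 := by
      exact_mod_cast norm_ne_zero_iff.2 h0
    set c : ℂ := (starRingEnd ℂ) (-I * (starRingEnd ℂ) d / ‖d‖) with hc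
    have hcc : (starRingEnd ℂ) c = -I * (starRingEnd ℂ) d / ‖d‖ := by
      rw [hc, conj_conj]
    have hdd : (starRingEnd ℂ) d * d = (‖d‖ : ℂ) ^ 2 := conj_mul' d
    have hcn : (starRingEnd ℂ) c * c = 1 := by
      rw [hc, conj_conj]
      simp only [map_div₀, map_mul, map_neg, conj_I, conj_conj, conj_ofReal]
      have : -I * (starRingEnd ℂ) d / ‖d‖ * (- -I * d / ‖d‖) = -(I * I) * ((starRingEnd ℂ) d * d) / (‖d‖:ℂ)^2 := by
        field_simp
      rw [this, hdd, I_mul_I]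
      field_simp
    have hpos := hs.pos h hl hW θ (x + c • y)
    rw [← hK] at hpos
    have e : inner ℂ (x + c • y) (K (x + c • y)) = inner ℂ x (K x) + inner ℂ y (K y)
        + (c * inner ℂ x (K y) + (starRingEnd ℂ) c * inner ℂ y (K x)) := by
      rw [map_add, map_smul, inner_add_left, inner_add_right, inner_add_right, inner_smul_left,
        inner_smul_left, inner_smul_right, inner_smul_right]
      linear_combination (inner ℂ y (K y)) * hcn
    have e2 : (c * inner ℂ x (K y) + (starRingEnd ℂ) c * inner ℂ y (K x)).im =
        ((starRingEnd ℂ) c * d).im := by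
      rw [hd]
      simp only [mul_im, add_im, conj_re, conj_im, sub_re, sub_im]
      ring
    have e3 : (starRingEnd ℂ) c * d = -I * ‖d‖ := by
      rw [hcc]
      have : -I * (starRingEnd ℂ) d / ‖d‖ * d = -I * ((starRingEnd ℂ) d * d) / ‖d‖ := by ring
      rw [this, hdd]
      field_simp
    rw [e, add_im, add_im, e2, e3] at hpos
    simp at hpos
    linarith

lemma SpecRes.key (hs : SpecRes P lam T) (h : SmoothGauge F p) (hl : ∀ i, F (lam i) < 1)
    (hW : ∀ x : E, x ≠ 0 → F (inner ℂ x (T x) / (‖x‖ : ℂ) ^ 2) ≤ 1)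
    {s : ℝ} (hs1 : 1 < s) {f : ℂ → ℂ}
    (hf : DifferentiableOn ℂ f {z | F z < s}) (hf1 : ∀ z, F z ≤ 1 → ‖f z‖ ≤ 1) :
    ‖Phi P lam f + ContinuousLinearMap.adjoint (Phi P lam (gtr F p f))‖ ≤ 2 := by
  have hpi := Real.pi_pos
  have hpic : (Real.pi : ℂ) ≠ 0 := by exact_mod_cast hpi.ne'
  have hmem : ∀ θ, crv F p θ ∈ {z | F z < s} := by
    intro θ
    change F _ < s
    rw [h.F_crv]; exact hs1
  have hfc : Continuous (fun θ => f (crv F p θ)) :=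
    hf.continuousOn.comp_continuous h.contc hmem
  have hφ : Continuous fun θ => (starRingEnd ℂ) (f (crv F p θ)) := continuous_conj.comp hfc
  set K : ℝ → E →L[ℂ] E := fun θ => Phi P lam (fun z => ker F p z θ) with hK
  have hKc : ∀ x y : E, Continuous fun θ => inner ℂ y (K θ x) := by
    intro x y
    simp only [hK, phi_inner]
    exact continuous_finsetSum _ fun i _ => (h.ker_cont (hl i)).mul continuous_const
  -- integrals
  have hInt : ∀ (φ : ℝ → ℂ), Continuous φ → ∀ x y : E,
      ∫ θ in (0:ℝ)..(2 * Real.pi), φ θ * inner ℂ y (K θ x) =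
        ∑ i, (∫ θ in (0:ℝ)..(2 * Real.pi), φ θ * ker F p (lam i) θ) * inner ℂ y (P i x) := by
    intro φ hφ x y
    simp only [hK, phi_inner, Finset.mul_sum]
    rw [intervalIntegral.integral_finsetSum]
    · refine Finset.sum_congr rfl fun i _ => ?_
      rw [← intervalIntegral.integral_mul_const]
      congr 1
      funext θ
      ring
    · intro i _
      exact (hφ.mul ((h.ker_cont (hl i)).mul continuous_const)).intervalIntegrable _ _
  have hI1 : ∀ x y : E, ∫ θ in (0:ℝ)..(2 * Real.pi), f (crv F p θ) * inner ℂ y (K θ x) =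
      2 * Real.pi * I * inner ℂ y (Phi P lam f x) := by
    intro x y
    rw [hInt _ hfc, phi_inner, Finset.mul_sum]
    refine Finset.sum_congr rfl fun i _ => ?_
    rw [h.cauchy hs1 hf (hl i)]
    ring
  have hI2 : ∀ x y : E, ∫ θ in (0:ℝ)..(2 * Real.pi), (starRingEnd ℂ) (f (crv F p θ)) * inner ℂ x (K θ y) =
      2 * Real.pi * I * inner ℂ x (Phi P lam (gtr F p f) y) := by
    intro x y
    rw [hInt _ hφ, phi_inner, Finset.mul_sum]
    refine Finset.sum_congr rfl fun i _ => ?_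
    rw [gtr]
    have := I_ne_zero
    field_simp
  have hI3 : ∀ x : E, ∫ θ in (0:ℝ)..(2 * Real.pi), (inner ℂ x (K θ x)).im = 2 * Real.pi * ‖x‖ ^ 2 := by
    intro x
    have h1 := hInt (fun _ => 1) continuous_const x x
    simp only [one_mul] at h1
    simp_rw [h.ker_integral (hl _)] at h1
    rw [← Finset.mul_sum, ← inner_sum] at h1
    have h2 : ∑ i, P i x = x := by
      have := congrArg (fun A : E →L[ℂ] E => A x) hs.sum
      simpa [_root_.sum_apply] using this
    rw [h2, inner_self_eq_norm_sq_to_K] at h1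
    have h3 := ContinuousLinearMap.intervalIntegral_comp_comm (μ := volume) (a := 0)
      (b := 2 * Real.pi) (f := fun θ => inner ℂ x (K θ x)) imCLM
      ((hKc x x).intervalIntegrable _ _)
    simp only [imCLM_apply] at h3
    rw [h3, h1]
    have : (2 * Real.pi * I * ((‖x‖ : ℂ)) ^ 2) = ((2 * Real.pi * ‖x‖ ^ 2 : ℝ) : ℂ) * I := by
      push_cast; ring
    change (2 * Real.pi * I * ((‖x‖ : ℂ)) ^ 2).im = _
    rw [this, im_ofReal_mul]
    simp
  set S := Phi P lam f + ContinuousLinearMap.adjoint (Phi P lam (gtr F p f)) with hS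
  have hid : ∀ x y : E, 2 * Real.pi * I * inner ℂ y (S x) = ∫ θ in (0:ℝ)..(2 * Real.pi),
      f (crv F p θ) * (inner ℂ y (K θ x) - (starRingEnd ℂ) (inner ℂ x (K θ y))) := by
    intro x y
    have i1 : IntervalIntegrable (fun θ => f (crv F p θ) * inner ℂ y (K θ x)) volume 0 (2 * Real.pi) :=
      (hfc.mul (hKc x y)).intervalIntegrable _ _
    have c2 : Continuous (fun θ => (starRingEnd ℂ) (f (crv F p θ)) * inner ℂ x (K θ y)) :=
      (hφ.mul (hKc y x))
    have i2 : IntervalIntegrable (fun θ => (starRingEnd ℂ) ((starRingEnd ℂ) (f (crv F p θ)) *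
      inner ℂ x (K θ y))) volume 0 (2 * Real.pi) :=
      (continuous_conj.comp c2).intervalIntegrable _ _
    have e : ∀ θ, f (crv F p θ) * (inner ℂ y (K θ x) - (starRingEnd ℂ) (inner ℂ x (K θ y))) =
      f (crv F p θ) * inner ℂ y (K θ x) - (starRingEnd ℂ) ((starRingEnd ℂ) (f (crv F p θ)) *
        inner ℂ x (K θ y)) := by
      intro θ
      rw [map_mul, conj_conj]; ring
    simp_rw [e]
    rw [intervalIntegral.integral_sub i1 i2, hI1]
    have h3 := ContinuousLinearMap.intervalIntegral_comp_comm (μ := volume) (a := 0)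
      (b := 2 * Real.pi) (f := fun θ => (starRingEnd ℂ) (f (crv F p θ)) * inner ℂ x (K θ y))
      (conjCLE : ℂ →L[ℝ] ℂ) (c2.intervalIntegrable _ _)
    rw [hI2] at h3
    have h3' : ∫ θ in (0:ℝ)..(2 * Real.pi), (starRingEnd ℂ) ((starRingEnd ℂ) (f (crv F p θ)) *
        inner ℂ x (K θ y)) = (starRingEnd ℂ) (2 * Real.pi * I * inner ℂ x (Phi P lam (gtr F p f) y)) := by
      simpa using h3
    rw [h3', hS, _root_.add_apply, inner_add_right,
      ContinuousLinearMap.adjoint_inner_right, map_mul, inner_conj_symm]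
    simp only [map_mul, conj_I, conj_ofReal, map_ofNat]
    ring
  have hbd : ∀ x y : E, ‖inner ℂ y (S x)‖ ≤ ‖x‖ ^ 2 + ‖y‖ ^ 2 := by
    intro x y
    have qx : Continuous fun θ => (inner ℂ x (K θ x)).im := continuous_im.comp (hKc x x)
    have qy : Continuous fun θ => (inner ℂ y (K θ y)).im := continuous_im.comp (hKc y y)
    have h1 : ‖2 * Real.pi * I * inner ℂ y (S x)‖ ≤ ∫ θ in (0:ℝ)..(2 * Real.pi),
        ((inner ℂ x (K θ x)).im + (inner ℂ y (K θ y)).im) := by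
      rw [hid]
      apply intervalIntegral.norm_integral_le_of_norm_le (by positivity)
      · refine ae_of_all _ fun θ _ => ?_
        rw [norm_mul]
        refine (mul_le_of_le_one_left (norm_nonneg _) (hf1 _ (h.F_crv θ).le)).trans ?_
        exact hs.sesq h hl hW θ x y
      · exact (qx.add qy).intervalIntegrable _ _
    rw [intervalIntegral.integral_add (qx.intervalIntegrable _ _) (qy.intervalIntegrable _ _),
      hI3, hI3] at h1
    have h2 : ‖2 * Real.pi * I * inner ℂ y (S x)‖ = 2 * Real.pi * ‖inner ℂ y (S x)‖ := by
      simp [abs_of_pos hpi]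
    rw [h2] at h1
    have : 2 * Real.pi * ‖inner ℂ y (S x)‖ ≤ 2 * Real.pi * (‖x‖ ^ 2 + ‖y‖ ^ 2) := by linarith
    exact le_of_mul_le_mul_left this (by positivity)
  apply ContinuousLinearMap.opNorm_le_bound _ (by norm_num)
  intro x
  rcases eq_or_ne (S x) 0 with h0 | h0
  · rw [h0, norm_zero]; positivity
  rcases eq_or_ne x 0 with hx0 | hx0
  · rw [hx0, map_zero, norm_zero]; simp
  have n1 : 0 < ‖S x‖ := norm_pos_iff.2 h0
  have n2 : 0 < ‖x‖ := norm_pos_iff.2 hx0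
  have := hbd x (((‖x‖ / ‖S x‖ : ℝ) : ℂ) • S x)
  rw [inner_smul_left, norm_mul, inner_self_eq_norm_sq_to_K, norm_smul] at this
  simp only [conj_ofReal, norm_real, norm_pow, norm_norm] at this
  rw [Real.norm_of_nonneg (by positivity)] at this
  have e1 : ‖x‖ / ‖S x‖ * ‖S x‖ ^ 2 = ‖x‖ * ‖S x‖ := by field_simp
  have e2 : ‖x‖ / ‖S x‖ * ‖S x‖ = ‖x‖ := by field_simp
  have e4 : ‖((‖S x‖ : ℝ) : ℂ)‖ = ‖S x‖ := by simp
  have this : ‖x‖ / ‖S x‖ * ‖S x‖ ^ 2 ≤ ‖x‖ ^ 2 + (‖x‖ / ‖S x‖ * ‖S x‖) ^ 2 := by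
    simpa using this
  rw [e1, e2] at this
  have : ‖x‖ * ‖S x‖ ≤ ‖x‖ * (2 * ‖x‖) := by nlinarith
  exact le_of_mul_le_mul_left this n2

end CP

namespace CP
open Complex MeasureTheory Set Filter Topology

section
variable {F : ℂ → ℝ} {p : ℕ}
variable {E : Type*} [NormedAddCommGroup E] [InnerProductSpace ℂ E] [CompleteSpace E]
variable {ι : Type*} [Fintype ι] [DecidableEq ι]
variable {P : ι → E →L[ℂ] E} {lam : ι → ℂ} {T : E →L[ℂ] E}

lemma alg_ineq (X G : E →L[ℂ] E) (K : ℝ) (hK : 0 ≤ K) (h1 : ‖X + star G‖ ≤ 2)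
    (h2 : ‖X * G * X‖ ≤ K) : ‖X‖ ^ 3 ≤ 2 * ‖X‖ ^ 2 + K := by
  rcases eq_or_ne X 0 with rfl | hX
  · simpa using hK
  have hn : 0 < ‖X‖ := norm_pos_iff.2 hX
  have e1 : ‖X * star X * (X * star X)‖ = ‖X‖ ^ 4 := by
    have : X * star X * (X * star X) = (X * star X) * star (X * star X) := by
      simp [mul_assoc]
    rw [this, CStarRing.norm_self_mul_star, CStarRing.norm_self_mul_star]
    ring
  have e2 : X * star X * (X * star X) = X * star (X + star G) * X * star X - X * G * X * star X := by
    rw [star_add, star_star]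
    noncomm_ring
  have e3 : ‖X‖ ^ 4 ≤ ‖X‖ * 2 * ‖X‖ * ‖X‖ + K * ‖X‖ := by
    rw [← e1, e2]
    refine (norm_sub_le _ _).trans ?_
    have a1 : ‖X * star (X + star G) * X * star X‖ ≤ ‖X‖ * 2 * ‖X‖ * ‖X‖ := by
      refine (norm_mul_le _ _).trans ?_
      rw [norm_star]
      gcongr
      refine (norm_mul_le _ _).trans ?_
      gcongr
      refine (norm_mul_le _ _).trans ?_
      rw [norm_star]
      gcongr
    have a2 : ‖X * G * X * star X‖ ≤ K * ‖X‖ := by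
      refine (norm_mul_le _ _).trans ?_
      rw [norm_star]
      gcongr
    exact add_le_add a1 a2
  have : ‖X‖ * ‖X‖ ^ 3 ≤ ‖X‖ * (2 * ‖X‖ ^ 2 + K) := by nlinarith
  exact le_of_mul_le_mul_left this hn

theorem SpecRes.bound (hs : SpecRes P lam T) (h : SmoothGauge F p) (hl : ∀ i, F (lam i) < 1)
    (hW : ∀ x : E, x ≠ 0 → F (inner ℂ x (T x) / (‖x‖ : ℂ) ^ 2) ≤ 1)
    {f : ℂ → ℂ} (hf : DifferentiableOn ℂ f {z | F z < 1}) (hf1 : ∀ z, F z < 1 → ‖f z‖ ≤ 1) :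
    ‖Phi P lam f‖ ≤ 1 + Real.sqrt 2 := by
  set A : Set ℝ := {r | ∃ f : ℂ → ℂ, DifferentiableOn ℂ f {z | F z < 1} ∧
    (∀ z, F z < 1 → ‖f z‖ ≤ 1) ∧ r = ‖Phi P lam f‖} with hA
  have hbdd : BddAbove A := by
    refine ⟨∑ i, ‖P i‖, ?_⟩
    rintro r ⟨f, _, hf1, rfl⟩
    exact phi_norm f fun i => hf1 _ (hl i)
  have hmemf : ‖Phi P lam f‖ ∈ A := ⟨f, hf, hf1, rfl⟩
  set K := sSup A with hK
  have hle : ∀ r ∈ A, r ≤ K := fun r hr => le_csSup hbdd hr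
  have hK0 : 0 ≤ K := (norm_nonneg _).trans (hle _ hmemf)
  have hopen : IsOpen {z | F z < 1} := isOpen_lt h.cont continuous_const
  -- inequality for dilations
  have hineq : ∀ r ∈ A, r ^ 3 ≤ 2 * r ^ 2 + K := by
    rintro r ⟨f, hf, hf1, rfl⟩
    have hdil : ∀ t : ℝ, 0 < t → t < 1 →
        ‖Phi P lam (fun z => f (t * z))‖ ^ 3 ≤ 2 * ‖Phi P lam (fun z => f (t * z))‖ ^ 2 + K := by
      intro t ht0 ht1
      have htp : t ^ p < 1 := pow_lt_one₀ ht0.le ht1 h.hp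
      have htp0 : 0 < t ^ p := pow_pos ht0 p
      have hs1 : 1 < (t ^ p)⁻¹ := (one_lt_inv₀ htp0).2 htp
      have hFt : ∀ z, F z < (t ^ p)⁻¹ → F (t * z) < 1 := by
        intro z hz
        rw [h.hom t z ht0.le]
        have := mul_lt_mul_of_pos_left hz htp0
        rwa [mul_inv_cancel₀ htp0.ne'] at this
      have hd : DifferentiableOn ℂ (fun z => f (t * z)) {z | F z < (t ^ p)⁻¹} := by
        refine hf.comp ((differentiable_id.const_mul (t : ℂ)).differentiableOn) ?_
        intro z hz
        exact hFt z hz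
      have hb : ∀ z, F z ≤ 1 → ‖f (t * z)‖ ≤ 1 :=
        fun z hz => hf1 _ (hFt z (lt_of_le_of_lt hz hs1))
      have hmono : {z | F z < 1} ⊆ {z | F z < (t ^ p)⁻¹} :=
        fun z (hz : F z < 1) => hz.trans hs1
      set ft : ℂ → ℂ := fun z => f (t * z)
      have hfc : Continuous (fun θ => ft (crv F p θ)) := by
        refine hd.continuousOn.comp_continuous h.contc fun θ => ?_
        change F _ < _
        rw [h.F_crv]; exact hs1
      have hg := h.gtr_diff hfc
      have hg1 : ∀ z, F z < 1 → ‖gtr F p ft z‖ ≤ 1 := fun z hz => h.gtr_le hs1 hd hb hz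
      have hk := hs.key h hl hW hs1 hd hb
      rw [← ContinuousLinearMap.star_eq_adjoint] at hk
      refine alg_ineq _ (Phi P lam (gtr F p ft)) K hK0 hk ?_
      rw [← hs.phi_mul, ← hs.phi_mul]
      apply hle
      refine ⟨_, ((hd.mono hmono).mul hg).mul (hd.mono hmono), ?_, rfl⟩
      intro z hz
      have b1 := hb z hz.le
      have b2 := hg1 z hz
      change ‖ft z * gtr F p ft z * ft z‖ ≤ 1
      rw [norm_mul, norm_mul]
      have b1' : ‖ft z‖ ≤ 1 := b1
      calc ‖ft z‖ * ‖gtr F p ft z‖ * ‖ft z‖ ≤ 1 * 1 * 1 := by gcongr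
        _ = 1 := by norm_num
    have hlim : Tendsto (fun t : ℝ => ‖Phi P lam (fun z => f (t * z))‖) (𝓝[<] 1)
        (𝓝 ‖Phi P lam f‖) := by
      apply Tendsto.norm
      unfold Phi
      apply tendsto_finsetSum
      intro i _
      apply Tendsto.smul_const
      have c1 : ContinuousAt f (lam i) :=
        (hf.differentiableAt (hopen.mem_nhds (hl i))).continuousAt
      have c2 : Tendsto (fun t : ℝ => (t : ℂ) * lam i) (𝓝[<] 1) (𝓝 (lam i)) := by
        have : Continuous (fun t : ℝ => (t : ℂ) * lam i) := continuous_ofReal.mul continuous_const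
        have := (this.tendsto 1).mono_left (nhdsWithin_le_nhds (s := Iio 1))
        simpa using this
      exact c1.tendsto.comp c2
    refine le_of_tendsto_of_tendsto (hlim.pow 3) (((hlim.pow 2).const_mul 2).add_const K) ?_
    filter_upwards [Ioo_mem_nhdsLT (zero_lt_one' ℝ)] with t ht
    exact hdil t ht.1 ht.2
  have hKineq : K ^ 3 ≤ 2 * K ^ 2 + K := by
    obtain ⟨u, _, hu, hum⟩ := exists_seq_tendsto_sSup ⟨_, hmemf⟩ hbdd
    refine le_of_tendsto_of_tendsto' (hu.pow 3) (((hu.pow 2).const_mul 2).add_const K) ?_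
    exact fun n => hineq _ (hum n)
  refine (hle _ hmemf).trans ?_
  by_contra hcon
  push Not at hcon
  have s2 : Real.sqrt 2 ^ 2 = 2 := Real.sq_sqrt (by norm_num)
  have s0 := Real.sqrt_nonneg 2
  have hKp : 0 < K := by linarith
  have : K * (K ^ 2) ≤ K * (2 * K + 1) := by nlinarith
  have := le_of_mul_le_mul_left this hKp
  nlinarith
end

end CP

namespace CP
open Complex MeasureTheory Set Filter Topology

lemma hasDerivAt_pp (m : ℕ) (x : ℝ) :
    HasDerivAt (fun x : ℝ => (max x 0) ^ (m + 2)) ((m + 2 : ℕ) * (max x 0) ^ (m + 1)) x := by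
  rcases lt_trichotomy x 0 with h | h | h
  · have h1 : (fun x : ℝ => (max x 0) ^ (m + 2)) =ᶠ[𝓝 x] fun _ => 0 := by
      filter_upwards [eventually_lt_nhds h] with y hy
      simp [max_eq_right hy.le]
    refine ((hasDerivAt_const x (0 : ℝ)).congr_of_eventuallyEq h1).congr_deriv ?_
    simp [max_eq_right h.le]
  · subst h
    have h1 : HasDerivWithinAt (fun x : ℝ => (max x 0) ^ (m + 2)) 0 (Iic 0) 0 := by
      refine (hasDerivWithinAt_const (0 : ℝ) (Iic 0) (0 : ℝ)).congr ?_ ?_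
      · intro y hy; simp [max_eq_right (show y ≤ 0 from hy)]
      · simp
    have h2 : HasDerivWithinAt (fun x : ℝ => (max x 0) ^ (m + 2)) 0 (Ici 0) 0 := by
      have := ((hasDerivAt_pow (m + 2) (0 : ℝ)).hasDerivWithinAt (s := Ici 0))
      refine (this.congr ?_ ?_).congr_deriv ?_
      · intro y hy; simp [max_eq_left (show 0 ≤ y from hy)]
      · simp
      · simp
    have h3 := h1.union h2
    rw [Iic_union_Ici, hasDerivWithinAt_univ] at h3
    refine h3.congr_deriv ?_
    simp
  · have h1 : (fun x : ℝ => (max x 0) ^ (m + 2)) =ᶠ[𝓝 x] fun y => y ^ (m + 2) := by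
      filter_upwards [eventually_gt_nhds h] with y hy
      simp [max_eq_left hy.le]
    refine ((hasDerivAt_pow (m + 2) x).congr_of_eventuallyEq h1).congr_deriv ?_
    simp [max_eq_left h.le]

lemma contDiff_pp (m : ℕ) : ContDiff ℝ 1 (fun x : ℝ => (max x 0) ^ (m + 2)) := by
  rw [contDiff_one_iff_deriv]
  refine ⟨fun x => (hasDerivAt_pp m x).differentiableAt, ?_⟩
  have : deriv (fun x : ℝ => (max x 0) ^ (m + 2)) =
      fun x : ℝ => (((m + 2 : ℕ) : ℝ) * (max x 0) ^ (m + 1)) := by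
    funext x; exact (hasDerivAt_pp m x).deriv
  rw [this]
  fun_prop

lemma convexOn_finsum {α : Type*} (t : Finset α) (f : α → ℂ → ℝ)
    (hf : ∀ i ∈ t, ConvexOn ℝ univ (f i)) : ConvexOn ℝ univ (fun z => ∑ i ∈ t, f i z) := by
  classical
  induction t using Finset.induction_on with
  | empty => simpa using convexOn_const (0 : ℝ) convex_univ
  | insert a s ha ih =>
    simp only [Finset.sum_insert ha]
    exact (hf a (by simp)).add (ih (fun i hi => hf i (by simp [hi])))

lemma exists_frontier {U : Set ℂ} (hU : IsOpen U) (h0 : (0 : ℂ) ∈ U) {z : ℂ} (hz : z ∉ U) :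
    ∃ t : ℝ, 0 < t ∧ t ≤ 1 ∧ (t : ℂ) * z ∈ frontier U := by
  have hpre : IsPreconnected ((fun t : ℝ => (t : ℂ) * z) '' Icc 0 1) :=
    isPreconnected_Icc.image _ (by fun_prop)
  have h1 : (((fun t : ℝ => (t : ℂ) * z) '' Icc 0 1) ∩ frontier U).Nonempty := by
    by_contra hne
    have h2 := hpre.subset_of_closure_inter_subset hU ⟨0, ⟨0, by simp, by simp⟩, h0⟩ (by
      rintro w ⟨hw1, hw2⟩
      by_contra hw3
      exact hne ⟨w, hw2, by rw [hU.frontier_eq]; exact ⟨hw1, hw3⟩⟩)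
    exact hz (h2 ⟨1, by simp, by simp⟩)
  obtain ⟨w, ⟨t, ht, rfl⟩, hw⟩ := h1
  refine ⟨t, lt_of_le_of_ne ht.1 ?_, ht.2, hw⟩
  rintro rfl
  simp only [ofReal_zero, zero_mul] at hw
  rw [hU.frontier_eq] at hw
  exact hw.2 h0

theorem exists_gauge {K U : Set ℂ} (hK : IsCompact K) (hKc : Convex ℝ K) (h0 : (0 : ℂ) ∈ K)
    (hU : IsOpen U) (hUb : Bornology.IsBounded U) (hKU : K ⊆ U) :
    ∃ (F : ℂ → ℝ) (p : ℕ), SmoothGauge F p ∧ (∀ z ∈ K, F z < 1) ∧ {z | F z < 1} ⊆ U := by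
  classical
  have hcomp : IsCompact (frontier U) :=
    Metric.isCompact_of_isClosed_isBounded isClosed_frontier
      (hUb.closure.subset frontier_subset_closure)
  let I := {l : ℂ →L[ℝ] ℝ // ∀ a ∈ K, l a < 1}
  obtain ⟨t, ht⟩ := hcomp.elim_finite_subcover (fun l : I => {z : ℂ | 1 < l.1 z})
    (fun l => isOpen_lt continuous_const l.1.continuous) (by
      intro u hu
      have huK : u ∉ K := fun h => by
        rw [hU.frontier_eq] at hu
        exact hu.2 (hKU h)
      obtain ⟨f, c, hf, hc⟩ := geometric_hahn_banach_closed_point hKc hK.isClosed huK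
      have hc0 : 0 < c := by simpa using hf 0 h0
      refine mem_iUnion.2 ⟨⟨c⁻¹ • f, ?_⟩, ?_⟩
      · intro a ha
        have := hf a ha
        simp only [_root_.smul_apply, smul_eq_mul]
        rw [inv_mul_lt_iff₀ hc0]; simpa using this
      · simp only [mem_ofPred_eq, _root_.smul_apply, smul_eq_mul]
        rw [lt_inv_mul_iff₀ hc0]; simpa using hc)
  have hc : ∀ l : I, ∃ c : ℝ, 0 ≤ c ∧ c < 1 ∧ ∀ a ∈ K, max (l.1 a) 0 ≤ c := by
    intro l
    obtain ⟨z0, hz0, hm⟩ := hK.exists_isMaxOn ⟨0, h0⟩ l.1.continuous.continuousOn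
    refine ⟨max (l.1 z0) 0, le_max_right _ _, max_lt (l.2 z0 hz0) one_pos, ?_⟩
    intro a ha
    exact max_le_max (hm ha) le_rfl
  choose c hc0 hc1 hcK using hc
  have hlim : Tendsto (fun p : ℕ => ∑ l ∈ t, c l ^ p) atTop (𝓝 (∑ l ∈ t, 0)) :=
    tendsto_finsetSum _ fun l _ => tendsto_pow_atTop_nhds_zero_of_lt_one (hc0 l) (hc1 l)
  rw [Finset.sum_const_zero] at hlim
  obtain ⟨p, hp1, hp2⟩ := ((hlim.eventually (gt_mem_nhds one_pos)).and
    (eventually_ge_atTop 2)).exists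
  obtain ⟨m, rfl⟩ : ∃ m, p = m + 2 := ⟨p - 2, by omega⟩
  set F : ℂ → ℝ := fun z => ∑ l ∈ t, (max (l.1 z) 0) ^ (m + 2) with hF
  have hhom : ∀ (s : ℝ) (z : ℂ), 0 ≤ s → F (s * z) = s ^ (m + 2) * F z := by
    intro s z hs
    simp only [hF, Finset.mul_sum]
    refine Finset.sum_congr rfl fun l _ => ?_
    rw [← mul_pow]
    congr 1
    have : l.1 ((s : ℂ) * z) = s * l.1 z := by
      rw [← real_smul, map_smul, smul_eq_mul]
    rw [this, mul_max_of_nonneg _ _ hs, mul_zero]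
  have hFn : ∀ z, 0 ≤ F z := fun z => Finset.sum_nonneg fun l _ => by positivity
  have hfr : ∀ u ∈ frontier U, 1 < F u := by
    intro u hu
    obtain ⟨l, hl, hlu⟩ := mem_iUnion₂.1 (ht hu)
    have hlu : 1 < l.1 u := hlu
    calc 1 < (max (l.1 u) 0) ^ (m + 2) :=
          one_lt_pow₀ (lt_of_lt_of_le hlu (le_max_left _ _)) (by omega)
      _ ≤ F u := Finset.single_le_sum (f := fun l : I => (max (l.1 u) 0) ^ (m + 2))
          (fun l _ => by positivity) hl
  refine ⟨F, m + 2, ⟨by omega, ?_, ?_, hhom, ?_⟩, ?_, ?_⟩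
  · exact ContDiff.sum fun l _ => (contDiff_pp m).comp l.1.contDiff
  · refine convexOn_finsum t _ fun l _ => ?_
    have h1 : ConvexOn ℝ univ (fun z : ℂ => max (l.1 z) 0) :=
      ConvexOn.sup (l.1.toLinearMap.convexOn convex_univ) (convexOn_const _ convex_univ)
    exact h1.pow (fun _ _ => le_max_right _ _) _
  · intro z hz
    obtain ⟨R, hR⟩ := hUb.subset_closedBall 0
    have hzn : 0 < ‖z‖ := norm_pos_iff.2 hz
    set s : ℝ := (|R| + 1) / ‖z‖
    have hs : 0 < s := by positivity
    have hsz : (s : ℂ) * z ∉ U := by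
      intro h
      have := hR h
      rw [mem_closedBall_zero_iff, norm_mul, norm_real, Real.norm_of_nonneg hs.le] at this
      simp only [s, div_mul_cancel₀ _ hzn.ne'] at this
      linarith [le_abs_self R]
    obtain ⟨r, hr0, hr1, hr⟩ := exists_frontier hU (hKU h0) hsz
    have := hfr _ hr
    rw [hhom _ _ hr0.le, hhom _ _ hs.le] at this
    by_contra hneg
    have : F z = 0 := le_antisymm (not_lt.1 hneg) (hFn z)
    simp_all
    linarith
  · intro z hz
    refine lt_of_le_of_lt ?_ hp1
    exact Finset.sum_le_sum fun l _ => pow_le_pow_left₀ (le_max_right _ _) (hcK l z hz) _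
  · intro z hz
    by_contra hzU
    obtain ⟨r, hr0, hr1, hr⟩ := exists_frontier hU (hKU h0) hzU
    have := hfr _ hr
    rw [hhom _ _ hr0.le] at this
    have h2 : r ^ (m + 2) ≤ 1 := pow_le_one₀ hr0.le hr1
    have h3 : F z < 1 := hz
    nlinarith [hFn z]

end CP

namespace CP
open Complex MeasureTheory Set Filter Topology

section TH
variable {E : Type*} [NormedAddCommGroup E] [InnerProductSpace ℂ E]

/-- numerical range -/
def NR (T : E →L[ℂ] E) : Set ℂ := {c | ∃ x : E, ‖x‖ = 1 ∧ c = inner ℂ x (T x)}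

lemma inner_self_one {x : E} (hx : ‖x‖ = 1) : inner ℂ x x = (1 : ℂ) := by
  rw [inner_self_eq_norm_sq_to_K, hx]; simp

lemma exists_phase (α β : ℂ) : ∃ ω : ℂ, ‖ω‖ = 1 ∧ (starRingEnd ℂ ω * α + ω * β).im = 0 := by
  set γ := β - starRingEnd ℂ α with hγ
  have key : ∀ ω : ℂ, (starRingEnd ℂ ω * α + ω * β).im = (ω * γ).im := by
    intro ω
    simp [hγ, mul_im, sub_re, sub_im]; ring
  by_cases h : γ = 0
  · exact ⟨1, by simp, by rw [key]; simp [h]⟩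
  · refine ⟨starRingEnd ℂ γ / ‖γ‖, ?_, ?_⟩
    · rw [norm_div, RCLike.norm_conj]; simp [h]
    · rw [key, div_mul_eq_mul_div, mul_comm, mul_conj]
      rw [← ofReal_div, ofReal_im]

lemma th_aux (S : E →L[ℂ] E) {x y : E} (hx : ‖x‖ = 1) (hy : ‖y‖ = 1)
    (hgx : inner ℂ x (S x) = (0 : ℂ)) (hgy : inner ℂ y (S y) = (1 : ℂ)) {s : ℝ}
    (hs : s ∈ Icc (0 : ℝ) 1) : ∃ z : E, ‖z‖ = 1 ∧ inner ℂ z (S z) = (s : ℂ) := by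
  obtain ⟨ω, hω, him⟩ := exists_phase (inner ℂ x (S y)) (inner ℂ y (S x))
  set x' := ω • x with hx'
  have hx'n : ‖x'‖ = 1 := by rw [hx', norm_smul, hω, hx, one_mul]
  have hgx' : inner ℂ x' (S x') = (0 : ℂ) := by
    simp [hx', hgx]
  set r : ℂ := starRingEnd ℂ ω * inner ℂ x (S y) + ω * inner ℂ y (S x) with hr
  have hrr : r = (r.re : ℂ) := by
    apply Complex.ext <;> simp [him]
  have hcross : inner ℂ x' (S y) + inner ℂ y (S x') = r := by
    simp [hx', hr, mul_comm]
  let z : ℝ → E := fun t => ((1 - t : ℝ) : ℂ) • x' + ((t : ℝ) : ℂ) • y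
  have hg : ∀ t : ℝ, inner ℂ (z t) (S (z t)) = ((t ^ 2 + t * (1 - t) * r.re : ℝ) : ℂ) := by
    intro t
    have : inner ℂ (z t) (S (z t)) = ((1 - t : ℝ) : ℂ) * ((1 - t : ℝ) : ℂ) * inner ℂ x' (S x')
        + ((1 - t : ℝ) : ℂ) * (t : ℂ) * (inner ℂ x' (S y) + inner ℂ y (S x'))
        + (t : ℂ) * t * inner ℂ y (S y) := by
      simp only [z, map_add, map_smul, inner_add_left, inner_add_right, inner_smul_left,
        inner_smul_right, conj_ofReal]
      ring
    rw [this, hgx', hcross, hgy, hrr]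
    push_cast
    simp only [ofReal_re]
    ring
  have hz0 : ∀ t ∈ Icc (0 : ℝ) 1, z t ≠ 0 := by
    intro t ht h
    have h1 : ((1 - t : ℝ) : ℂ) • x' = - (((t : ℝ) : ℂ) • y) := eq_neg_of_add_eq_zero_left h
    have h2 : 1 - t = t := by
      have := congrArg norm h1
      rw [norm_neg, norm_smul _ x', norm_smul _ y, hx'n, hy, norm_real, norm_real,
        Real.norm_of_nonneg ht.1, Real.norm_of_nonneg (by linarith [ht.2])] at this
      simpa using this
    have h3 : t ≠ 0 := by intro h; rw [h] at h2; norm_num at h2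
    rw [h2, ← smul_neg] at h1
    have h4 : x' = -y := smul_right_injective E (by exact_mod_cast h3 : (t : ℂ) ≠ 0) h1
    rw [h4] at hgx'
    simp [hgy] at hgx'
  have hzc : Continuous z := by fun_prop
  let h : ℝ → ℝ := fun t => (t ^ 2 + t * (1 - t) * r.re) / ‖z t‖ ^ 2
  have hc : ContinuousOn h (Icc 0 1) := by
    refine ContinuousOn.div (by fun_prop) (by fun_prop) ?_
    intro t ht
    exact pow_ne_zero 2 (norm_ne_zero_iff.2 (hz0 t ht))
  have h0 : h 0 = 0 := by simp [h]
  have h1 : h 1 = 1 := by simp [h, z, hy]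
  have hiv := intermediate_value_Icc (zero_le_one) hc
  rw [h0, h1] at hiv
  obtain ⟨t, ht, hts⟩ := hiv hs
  have hn : ‖z t‖ ≠ 0 := norm_ne_zero_iff.2 (hz0 t ht)
  refine ⟨((‖z t‖⁻¹ : ℝ) : ℂ) • z t, ?_, ?_⟩
  · rw [norm_smul, norm_real, norm_inv, norm_norm, inv_mul_cancel₀ hn]
  · rw [map_smul, inner_smul_left, inner_smul_right, hg, conj_ofReal, ← hts]
    rw [← ofReal_mul, ← ofReal_mul]
    congr 1
    simp only [h]
    field_simp

theorem NR_convex (T : E →L[ℂ] E) : Convex ℝ (NR T) := by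
  rw [convex_iff_segment_subset]
  rintro a ⟨x, hx, rfl⟩ b ⟨y, hy, rfl⟩ c hc
  rw [segment_eq_image_lineMap] at hc
  obtain ⟨s, hs, rfl⟩ := hc
  set a := inner ℂ x (T x) with ha
  set b := inner ℂ y (T y) with hb
  by_cases hab : a = b
  · rw [← hab]; simp only [AffineMap.lineMap_same, AffineMap.const_apply]; exact ⟨x, hx, ha⟩
  have hba : b - a ≠ 0 := sub_ne_zero.2 (Ne.symm hab)
  let S : E →L[ℂ] E := (b - a)⁻¹ • (T - a • ContinuousLinearMap.id ℂ E)
  have hS : ∀ z : E, ‖z‖ = 1 → inner ℂ z (S z) = (b - a)⁻¹ * (inner ℂ z (T z) - a) := by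
    intro z hz
    simp [S, hz]
  obtain ⟨z, hz, hgz⟩ := th_aux S hx hy (by rw [hS x hx, ← ha]; simp)
    (by rw [hS y hy, ← hb]; field_simp) hs
  refine ⟨z, hz, ?_⟩
  rw [hS z hz] at hgz
  have : inner ℂ z (T z) = a + s * (b - a) := by
    rw [← hgz]; field_simp; ring
  rw [this, AffineMap.lineMap_apply]
  simp [real_smul]; ring

theorem NR_compact [FiniteDimensional ℂ E] (T : E →L[ℂ] E) : IsCompact (NR T) := by
  have : ProperSpace E := FiniteDimensional.proper ℂ E
  have : NR T = (fun x : E => (inner ℂ x (T x) : ℂ)) '' Metric.sphere 0 1 := by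
    ext c; constructor
    · rintro ⟨x, hx, rfl⟩; exact ⟨x, by simpa using hx, rfl⟩
    · rintro ⟨x, hx, rfl⟩; exact ⟨x, by simpa using hx, rfl⟩
  rw [this]
  exact (isCompact_sphere _ _).image (by fun_prop)

lemma NR_of_ne (T : E →L[ℂ] E) {x : E} (hx : x ≠ 0) :
    inner ℂ x (T x) / (‖x‖ : ℂ) ^ 2 ∈ NR T := by
  have hn : ‖x‖ ≠ 0 := norm_ne_zero_iff.2 hx
  refine ⟨((‖x‖⁻¹ : ℝ) : ℂ) • x, ?_, ?_⟩
  · rw [norm_smul, norm_real, norm_inv, norm_norm, inv_mul_cancel₀ hn]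
  · rw [map_smul, inner_smul_left, inner_smul_right, conj_ofReal]
    have : (‖x‖ : ℂ) ≠ 0 := by exact_mod_cast hn
    push_cast
    field_simp

lemma NR_eigen (T : E →L[ℂ] E) {x : E} (hx : x ≠ 0) {μ : ℂ} (h : T x = μ • x) : μ ∈ NR T := by
  have := NR_of_ne T hx
  rw [h, inner_smul_right, inner_self_eq_norm_sq_to_K] at this
  have hn : (‖x‖ : ℂ) ≠ 0 := by exact_mod_cast norm_ne_zero_iff.2 hx
  change μ * (‖x‖ : ℂ) ^ 2 / (‖x‖ : ℂ) ^ 2 ∈ NR T at this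
  rwa [mul_div_assoc, div_self (pow_ne_zero 2 hn), mul_one] at this

end TH
end CP

namespace CP
open Complex MeasureTheory Set Filter Topology

section Diag
variable {ι : Type*} [Fintype ι] [DecidableEq ι]

/-- the discriminant-like quantity of a matrix -/
noncomputable def dsc {R : Type*} [CommRing R] (M : Matrix ι ι R) : R :=
  (aeval M (derivative M.charpoly)).det

lemma dsc_map {R S : Type*} [CommRing R] [CommRing S] (φ : R →+* S) (M : Matrix ι ι R) :
    dsc (M.map φ) = φ (dsc M) := by
  unfold dsc
  rw [RingHom.map_det, Matrix.charpoly_map, Polynomial.derivative_map]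
  congr 1
  symm
  have := Polynomial.map_aeval_eq_aeval_map (φ := φ) (ψ := φ.mapMatrix (m := ι)) (by
    ext r i j
    simp [Matrix.algebraMap_matrix_apply]
    split_ifs <;> simp) (derivative M.charpoly) M
  simpa using this

lemma aeval_diag (d : ι → ℂ) (p : ℂ[X]) :
    aeval (diagonal d) p = diagonal (fun i => p.eval (d i)) := by
  have h := Polynomial.aeval_algHom_apply (diagonalAlgHom (n := ι) (α := ℂ) ℂ) d p
  simp only [diagonalAlgHom_apply] at h
  rw [h]
  congr 1
  funext i
  have h2 := Polynomial.aeval_algHom_apply (Pi.evalAlgHom ℂ (fun _ : ι => ℂ) i) d p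
  simp only [Pi.evalAlgHom_apply] at h2
  rw [← h2]
  simp [Polynomial.aeval_def, Polynomial.eval₂_eq_eval_map]

lemma dsc_diagonal (d : ι → ℂ) (hd : Function.Injective d) : dsc (diagonal d) ≠ 0 := by
  unfold dsc
  rw [aeval_diag, det_diagonal, charpoly_diagonal]
  refine Finset.prod_ne_zero_iff.2 fun i _ => ?_
  have hsep : (∏ i, (X - C (d i))).Separable := Polynomial.separable_prod_X_sub_C_iff.2 hd
  have := hsep.eval₂_derivative_ne_zero (RingHom.id ℂ) (x := d i) (by
    rw [Polynomial.eval₂_id, Polynomial.eval_prod]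
    exact Finset.prod_eq_zero (Finset.mem_univ i) (by simp))
  rwa [Polynomial.eval₂_id] at this

lemma aeval_mulVec_eig (M : Matrix ι ι ℂ) {v : ι → ℂ} {μ : ℂ} (h : M *ᵥ v = μ • v) (p : ℂ[X]) :
    (aeval M p) *ᵥ v = p.eval μ • v := by
  induction p using Polynomial.induction_on' with
  | add p q hp hq => rw [map_add, add_mulVec, hp, hq, eval_add, add_smul]
  | monomial n a =>
    rw [aeval_monomial, eval_monomial]
    have : ∀ n : ℕ, (M ^ n) *ᵥ v = μ ^ n • v := by
      intro n
      induction n with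
      | zero => simp
      | succ n ih => rw [pow_succ, ← mulVec_mulVec, h, mulVec_smul, ih, smul_smul]; ring_nf
    rw [← mulVec_mulVec, this, Matrix.algebraMap_eq_diagonal]
    funext i
    simp [mulVec_diagonal, mul_assoc]

lemma exists_eigvec (M : Matrix ι ι ℂ) {μ : ℂ} (h : M.charpoly.IsRoot μ) :
    ∃ v : ι → ℂ, v ≠ 0 ∧ M *ᵥ v = μ • v := by
  have h1 : ((scalar ι) μ - M).det = 0 := by rw [← eval_charpoly]; exact h
  obtain ⟨v, hv, h2⟩ := exists_mulVec_eq_zero_iff.2 h1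
  refine ⟨v, hv, ?_⟩
  rw [sub_mulVec, sub_eq_zero] at h2
  rw [← h2]
  funext i; simp [mulVec_diagonal]

lemma nodup_of_dsc (M : Matrix ι ι ℂ) (h : dsc M ≠ 0) : M.charpoly.roots.Nodup := by
  rw [Multiset.nodup_iff_count_le_one]
  intro μ
  rw [count_roots]
  by_contra hlt
  obtain ⟨h1, h2⟩ := (one_lt_rootMultiplicity_iff_isRoot M.charpoly_monic.ne_zero).1 (not_le.1 hlt)
  obtain ⟨v, hv, hMv⟩ := exists_eigvec M h1
  apply h
  unfold dsc
  rw [← exists_mulVec_eq_zero_iff]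
  refine ⟨v, hv, ?_⟩
  rw [aeval_mulVec_eig M hMv, show eval μ (derivative M.charpoly) = 0 from h2, zero_smul]

theorem charpoly_eq_prod (M : Matrix ι ι ℂ) (h : dsc M ≠ 0) :
    M.charpoly = ∏ a ∈ M.charpoly.roots.toFinset, (X - C a) := by
  conv_lhs => rw [(IsAlgClosed.splits M.charpoly).eq_prod_roots_of_monic M.charpoly_monic]
  rw [Finset.prod, Multiset.toFinset_val, (nodup_of_dsc M h).dedup]

theorem eventually_dsc (A : Matrix ι ι ℂ) :
    ∃ D : Matrix ι ι ℂ, ∀ᶠ s in 𝓝[≠] (0 : ℂ), dsc (A + s • D) ≠ 0 := by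
  let e := Fintype.equivFin ι
  let d : ι → ℂ := fun i => ((e i : ℕ) : ℂ)
  have hd : Function.Injective d := fun i j h => by
    apply e.injective; apply Fin.ext; exact Nat.cast_injective (R := ℂ) h
  let D : Matrix ι ι ℂ := diagonal d - A
  let M : Matrix ι ι ℂ[X] := fun i j => C (A i j) + X * C (D i j)
  have hM : ∀ s : ℂ, M.map (evalRingHom s) = A + s • D := by
    intro s; ext i j; rw [Matrix.map_apply]; simp [M]; ring
  have hne : dsc M ≠ 0 := by
    intro h
    apply dsc_diagonal d hd
    have : diagonal d = M.map (evalRingHom 1) := by rw [hM]; simp [D]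
    rw [this, dsc_map, h, map_zero]
  refine ⟨D, ?_⟩
  have hfin : {s : ℂ | (dsc M).eval s = 0}.Finite := by
    refine (dsc M).roots.toFinset.finite_toSet.subset ?_
    intro s hs
    simp [hne]; exact hs
  have h1 : ∀ᶠ s in 𝓝[≠] (0 : ℂ), s ∉ {s : ℂ | (dsc M).eval s = 0} := by
    have h2 : ({s : ℂ | (dsc M).eval s = 0} \ {0})ᶜ ∈ 𝓝 (0 : ℂ) :=
      (hfin.subset sdiff_subset).isClosed.isOpen_compl.mem_nhds (by simp)
    filter_upwards [mem_nhdsWithin_of_mem_nhds h2, self_mem_nhdsWithin] with s hs hs0 hs1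
    exact hs ⟨hs1, hs0⟩
  filter_upwards [h1] with s hs
  rw [← hM, dsc_map]
  exact hs

end Diag

section Spec
variable {E : Type*} [NormedAddCommGroup E] [InnerProductSpace ℂ E]

theorem specRes_of_prod (T : E →L[ℂ] E) (s : Finset ℂ) (h : aeval T (∏ a ∈ s, (X - C a)) = 0) :
    ∃ P : s → E →L[ℂ] E, SpecRes P (fun i : s => (i : ℂ)) T ∧
      ∀ q : ℂ[X], aeval T q = Phi P (fun i : s => (i : ℂ)) (fun z => q.eval z) := by
  classical
  set P : s → E →L[ℂ] E := fun i => aeval T (Lagrange.basis s id (i : ℂ)) with hP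
  have hinj : Set.InjOn (id : ℂ → ℂ) (s : Set ℂ) := Function.injective_id.injOn
  have h1 : ∀ i : s, aeval T (X - C (i : ℂ)) * P i = 0 := by
    intro i
    rw [hP, ← map_mul]
    have : (X - C (i : ℂ)) * Lagrange.basis s id (i : ℂ) =
        (∏ j ∈ s.erase (i : ℂ), C ((i : ℂ) - j)⁻¹) * (∏ a ∈ s, (X - C a)) := by
      rw [← Finset.mul_prod_erase s _ i.2]
      unfold Lagrange.basis Lagrange.basisDivisor
      rw [Finset.prod_mul_distrib]
      simp only [id]
      ring
    rw [this, map_mul, h, mul_zero]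
  have h2 : ∀ (p : ℂ[X]) (i : s), aeval T p * P i = p.eval (i : ℂ) • P i := by
    intro p i
    obtain ⟨g, hg⟩ : (X - C (i : ℂ)) ∣ p - C (p.eval (i : ℂ)) := by
      rw [dvd_iff_isRoot]; simp
    have : p = g * (X - C (i : ℂ)) + C (p.eval (i : ℂ)) := by rw [mul_comm, ← hg]; ring
    conv_lhs => rw [this]
    rw [map_add, map_mul, add_mul, mul_assoc, h1, mul_zero, zero_add, aeval_C,
      Algebra.algebraMap_eq_smul_one, smul_mul_assoc, one_mul]
  have hsum : ∑ i, P i = 1 := by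
    rcases s.eq_empty_or_nonempty with hs | hs
    · subst hs
      simp only [Finset.prod_empty, map_one] at h
      rw [h]; simp
    · have := congrArg (aeval T) (Lagrange.sum_basis hinj hs)
      rw [map_sum, map_one, ← Finset.sum_coe_sort] at this
      exact this
  have h3 : ∀ q : ℂ[X], aeval T q = ∑ i : s, q.eval (i : ℂ) • P i := by
    intro q
    calc aeval T q = aeval T q * ∑ i, P i := by rw [hsum, mul_one]
      _ = _ := by rw [Finset.mul_sum]; exact Finset.sum_congr rfl fun i _ => h2 q i
  refine ⟨P, ⟨?_, hsum, ?_⟩, h3⟩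
  · intro i j
    have := h2 (Lagrange.basis s id (i : ℂ)) j
    change P i * P j = _ at this
    rw [this]
    split_ifs with hij
    · subst hij
      have := Lagrange.eval_basis_self hinj i.2
      simp only [id] at this
      rw [this, one_smul]
    · have := Lagrange.eval_basis_of_ne (v := (id : ℂ → ℂ)) (s := s)
        (i := (i : ℂ)) (j := (j : ℂ)) (fun h => hij (Subtype.ext h)) j.2
      simp only [id] at this
      rw [this, zero_smul]
  · have := h3 X
    simpa using this

end Spec

theorem specRes_matrix {n : ℕ} (M : Matrix (Fin n) (Fin n) ℂ) (h : dsc M ≠ 0) :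
    ∃ (s : Finset ℂ)
      (P : s → EuclideanSpace ℂ (Fin n) →L[ℂ] EuclideanSpace ℂ (Fin n)),
      SpecRes P (fun i : s => (i : ℂ)) (toEuclideanCLM (n := Fin n) (𝕜 := ℂ) M) ∧
      (∀ q : ℂ[X], aeval (toEuclideanCLM (n := Fin n) (𝕜 := ℂ) M) q =
        Phi P (fun i : s => (i : ℂ)) (fun z => q.eval z)) ∧
      ∀ i : s, (i : ℂ) ∈ NR (toEuclideanCLM (n := Fin n) (𝕜 := ℂ) M) := by
  have h0 := Polynomial.aeval_algHom_apply (toEuclideanCLM (n := Fin n) (𝕜 := ℂ)) M M.charpoly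
  rw [aeval_self_charpoly, map_zero, charpoly_eq_prod M h] at h0
  obtain ⟨P, hP, hq⟩ := specRes_of_prod _ _ h0
  refine ⟨_, P, hP, hq, ?_⟩
  rintro ⟨i, hi⟩
  rw [Multiset.mem_toFinset, mem_roots M.charpoly_monic.ne_zero] at hi
  obtain ⟨v, hv, hMv⟩ := exists_eigvec M hi
  refine NR_eigen _ (x := WithLp.toLp 2 v) (by simpa using hv) ?_
  rw [toEuclideanCLM_toLp, hMv]
  rfl

end CP

namespace CP
open Complex MeasureTheory Set Filter Topology

local notation "eu" => toEuclideanCLM (𝕜 := ℂ)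

lemma cp_zero {n : ℕ} (A : Matrix (Fin n) (Fin n) ℂ) (q : ℂ[X]) (h0 : (0 : ℂ) ∈ NR (eu A))
    {m : ℝ} (hm : ∀ z ∈ NR (eu A), ‖q.eval z‖ ≤ m) {ε : ℝ} (hε : 0 < ε) :
    ‖aeval (eu A) q‖ ≤ (1 + √2) * (m + ε) := by
  have hm0 : 0 ≤ m := (norm_nonneg _).trans (hm 0 h0)
  have hme : 0 < m + ε := by linarith
  have hKc := NR_compact (eu A)
  obtain ⟨R, hR⟩ := hKc.isBounded.subset_ball 0
  obtain ⟨F, p, hF, hFK, hFU⟩ := exists_gauge (U := {z | ‖q.eval z‖ < m + ε} ∩ Metric.ball 0 R)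
    hKc (NR_convex _) h0
    ((isOpen_lt (by fun_prop) continuous_const).inter Metric.isOpen_ball)
    (Metric.isBounded_ball.subset inter_subset_right)
    (fun z hz => ⟨lt_of_le_of_lt (hm z hz) (by linarith), hR hz⟩)
  obtain ⟨δ, hδ, hδV⟩ := hKc.exists_thickening_subset_open
    (t := {z | F z < 1}) (isOpen_lt hF.cont continuous_const) hFK
  obtain ⟨D, hD⟩ := eventually_dsc A
  have hcont : Continuous fun s : ℂ => eu (A + s • D) := by
    have : (fun s : ℂ => eu (A + s • D)) = fun s => eu A + s • eu D := by
      funext s; rw [map_add, map_smul]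
    rw [this]; fun_prop
  have hnear : ∀ᶠ s in 𝓝[≠] (0 : ℂ), ‖eu (A + s • D) - eu A‖ < δ := by
    have h1 : Tendsto (fun s : ℂ => ‖eu (A + s • D) - eu A‖) (𝓝 0) (𝓝 0) := by
      have h2 : Continuous (fun s : ℂ => ‖eu (A + s • D) - eu A‖) := by fun_prop
      have h3 := h2.tendsto 0
      simpa using h3
    exact (h1.eventually (gt_mem_nhds hδ)).filter_mono nhdsWithin_le_nhds
  have hlim : Tendsto (fun s : ℂ => ‖aeval (eu (A + s • D)) q‖) (𝓝[≠] 0) (𝓝 ‖aeval (eu A) q‖) := by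
    have h2 : Continuous (fun s : ℂ => ‖aeval (eu (A + s • D)) q‖) :=
      ((Polynomial.continuous_aeval q).comp hcont).norm
    have h3 := h2.tendsto 0
    rw [zero_smul, add_zero] at h3
    exact h3.mono_left nhdsWithin_le_nhds
  refine le_of_tendsto hlim ?_
  filter_upwards [hD, hnear] with s hs1 hs2
  have hNR : ∀ z ∈ NR (eu (A + s • D)), F z < 1 := by
    rintro z ⟨x, hx, rfl⟩
    apply hδV
    rw [Metric.mem_thickening_iff]
    refine ⟨inner ℂ x (eu A x), ⟨x, hx, rfl⟩, ?_⟩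
    rw [dist_eq_norm, ← inner_sub_right, ← _root_.sub_apply]
    calc _ ≤ ‖x‖ * ‖(eu (A + s • D) - eu A) x‖ := norm_inner_le_norm _ _
      _ ≤ ‖x‖ * (‖eu (A + s • D) - eu A‖ * ‖x‖) := by
          gcongr; exact ContinuousLinearMap.le_opNorm _ _
      _ < δ := by rw [hx]; simpa using hs2
  obtain ⟨t, P, hP, hq, ht⟩ := specRes_matrix (A + s • D) hs1
  have hb := hP.bound hF (fun i => hNR _ (ht i))
    (fun x hx => (hNR _ (NR_of_ne _ hx)).le)
    (f := fun z => (C ((m + ε : ℝ) : ℂ)⁻¹ * q).eval z)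
    (Polynomial.differentiable _).differentiableOn (by
      intro z hz
      have := (hFU hz).1
      rw [eval_mul, eval_C, norm_mul, norm_inv, norm_real, Real.norm_of_nonneg hme.le,
        inv_mul_le_iff₀ hme, mul_one]
      exact le_of_lt this)
  rw [← hq, map_mul, aeval_C, Algebra.algebraMap_eq_smul_one, smul_mul_assoc, one_mul,
    norm_smul, norm_inv, norm_real, Real.norm_of_nonneg hme.le, inv_mul_le_iff₀ hme, mul_comm] at hb
  exact hb

theorem cp_main {n : ℕ} (A : Matrix (Fin n) (Fin n) ℂ) (q : ℂ[X]) (hne : (NR (eu A)).Nonempty)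
    {m : ℝ} (hm : ∀ z ∈ NR (eu A), ‖q.eval z‖ ≤ m) :
    ‖aeval (eu A) q‖ ≤ (1 + √2) * m := by
  obtain ⟨c, hc⟩ := hne
  have heq : aeval (eu (A - c • 1)) (q.comp (X + C c)) = aeval (eu A) q := by
    rw [aeval_comp]
    congr 2
    simp [Algebra.algebraMap_eq_smul_one]
  have hNR : ∀ z, z ∈ NR (eu (A - c • 1)) ↔ z + c ∈ NR (eu A) := by
    intro z
    have : ∀ x, ‖x‖ = 1 → inner ℂ x (eu (A - c • 1) x) = inner ℂ x (eu A x) - c := by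
      intro x hx
      simp [hx]
    constructor
    · rintro ⟨x, hx, rfl⟩
      exact ⟨x, hx, by rw [this x hx]; ring⟩
    · rintro ⟨x, hx, h⟩
      exact ⟨x, hx, by rw [this x hx, ← h]; ring⟩
  have h1 : ∀ ε : ℝ, 0 < ε → ‖aeval (eu A) q‖ ≤ (1 + √2) * (m + ε) := by
    intro ε hε
    rw [← heq]
    refine cp_zero (A - c • 1) (q.comp (X + C c)) ((hNR 0).2 (by simpa using hc)) ?_ hε
    intro z hz
    have := hm _ ((hNR z).1 hz)
    simpa [eval_comp] using this
  have h2 : Tendsto (fun ε : ℝ => (1 + √2) * (m + ε)) (𝓝[>] 0) (𝓝 ((1 + √2) * (m + 0))) :=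
    ((by fun_prop : Continuous (fun ε : ℝ => (1 + √2) * (m + ε))).tendsto 0).mono_left
      nhdsWithin_le_nhds
  rw [add_zero] at h2
  refine ge_of_tendsto h2 ?_
  filter_upwards [self_mem_nhdsWithin] with ε hε using h1 ε hε

end CP

namespace CP
open Complex MeasureTheory Set Filter Topology

open scoped MatrixOrder in
lemma exists_factor {n : ℕ} {W : Matrix (Fin n) (Fin n) ℂ} (hW : W.PosDef) :
    ∃ S : Matrix (Fin n) (Fin n) ℂ, W = Sᴴ * S ∧ IsUnit S.det := by
  obtain ⟨S, hS⟩ := CStarAlgebra.nonneg_iff_eq_star_mul_self.mp hW.posSemidef.nonneg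
  refine ⟨S, hS, ?_⟩
  have h1 := (Matrix.isUnit_iff_isUnit_det _).1 hW.isUnit
  rw [hS, det_mul] at h1
  exact isUnit_of_mul_isUnit_right h1

lemma factor_inner {n : ℕ} (S : Matrix (Fin n) (Fin n) ℂ) (u v : Fin n → ℂ) :
    star u ⬝ᵥ ((Sᴴ * S) *ᵥ v) =
      inner ℂ (WithLp.toLp 2 (S *ᵥ u)) (WithLp.toLp 2 (S *ᵥ v)) := by
  rw [EuclideanSpace.inner_toLp_toLp, star_mulVec, ← mulVec_mulVec, dotProduct_mulVec,
    dotProduct_comm]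

lemma factor_norm {n : ℕ} (S : Matrix (Fin n) (Fin n) ℂ) (u : Fin n → ℂ) :
    star u ⬝ᵥ ((Sᴴ * S) *ᵥ u) = (‖(WithLp.toLp 2 (S *ᵥ u) : EuclideanSpace ℂ (Fin n))‖ : ℂ) ^ 2 := by
  rw [factor_inner, inner_self_eq_norm_sq_to_K]; rfl

lemma conj_aeval {n : ℕ} (S B : Matrix (Fin n) (Fin n) ℂ) (hS : IsUnit S.det) (q : ℂ[X]) :
    aeval (S * B * S⁻¹) q * S = S * aeval B q := by
  have h1 : S⁻¹ * S = 1 := nonsing_inv_mul S hS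
  induction q using Polynomial.induction_on' with
  | add p q hp hq => rw [map_add, map_add, add_mul, mul_add, hp, hq]
  | monomial k a =>
    have : ∀ k : ℕ, (S * B * S⁻¹) ^ k * S = S * B ^ k := by
      intro k
      induction k with
      | zero => simp
      | succ k ih =>
        rw [pow_succ, mul_assoc, mul_assoc (S * B), h1, mul_one, ← mul_assoc, ih, pow_succ, mul_assoc]
    rw [aeval_monomial, aeval_monomial, mul_assoc, this, ← mul_assoc, ← mul_assoc,
      Algebra.commutes]

end CP

/-- weighted Crouzeix–Palencia bound: for hpd `W`, any matrix `B`,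
any polynomial `q` and any vector `x`,
`‖q(B) x‖_W ≤ (1 + √2) · (sup_{z ∈ FOV^W(B)} |q(z)|) · ‖x‖_W`,
where `‖u‖_W = √(Re (uᴴ W u))`. -/
theorem weighted_crouzeix_palencia {n : ℕ}
    (W B : Matrix (Fin n) (Fin n) ℂ) (hW : W.PosDef)
    (q : Polynomial ℂ) (x : Fin n → ℂ) :
    Real.sqrt ((star ((aeval B q) *ᵥ x) ⬝ᵥ (W *ᵥ ((aeval B q) *ᵥ x))).re) ≤
      (1 + Real.sqrt 2) *
        sSup ((fun z : ℂ => ‖q.eval z‖) '' fovW W B) *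
        Real.sqrt ((star x ⬝ᵥ (W *ᵥ x)).re) := by
  by_cases hx : x = 0
  · subst hx; simp
  obtain ⟨S, hS, hSu⟩ := CP.exists_factor hW
  set T := toEuclideanCLM (𝕜 := ℂ) (S * B * S⁻¹) with hT
  have hinv : S⁻¹ * S = 1 := nonsing_inv_mul S hSu
  have hinv2 : S * S⁻¹ = 1 := mul_nonsing_inv S hSu
  have hTS : ∀ z : Fin n → ℂ, T (WithLp.toLp 2 (S *ᵥ z)) = WithLp.toLp 2 (S *ᵥ (B *ᵥ z)) := by
    intro z
    rw [hT, toEuclideanCLM_toLp, mulVec_mulVec, mulVec_mulVec, mul_assoc, hinv, mul_one]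
  have hS0 : ∀ z : Fin n → ℂ, z ≠ 0 →
      (WithLp.toLp 2 (S *ᵥ z) : EuclideanSpace ℂ (Fin n)) ≠ 0 := by
    intro z hz h
    have h2 : S *ᵥ z = 0 := by simpa using h
    apply hz
    rw [← one_mulVec z, ← hinv, ← mulVec_mulVec, h2, mulVec_zero]
  have hsub : fovW W B ⊆ CP.NR T := by
    rintro c ⟨z, hz, rfl⟩
    have := CP.NR_of_ne T (hS0 z hz)
    rw [hTS] at this
    rw [hS, CP.factor_inner, CP.factor_norm]
    exact this
  have hsup : CP.NR T ⊆ fovW W B := by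
    rintro c ⟨y, hy, rfl⟩
    have hy' : (WithLp.toLp 2 (S *ᵥ (S⁻¹ *ᵥ y.ofLp)) : EuclideanSpace ℂ (Fin n)) = y := by
      rw [mulVec_mulVec, hinv2, one_mulVec]
    refine ⟨S⁻¹ *ᵥ y.ofLp, ?_, ?_⟩
    · intro h
      rw [h, mulVec_zero] at hy'
      rw [← hy'] at hy
      simp at hy
    · rw [hS, CP.factor_inner, CP.factor_norm, ← hTS, hy', hy]
      simp
  have heq : fovW W B = CP.NR T := Set.Subset.antisymm hsub hsup
  have hbdd : BddAbove ((fun z : ℂ => ‖q.eval z‖) '' fovW W B) := by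
    rw [heq]
    exact ((CP.NR_compact T).image (by fun_prop)).bddAbove
  have hmain := CP.cp_main (S * B * S⁻¹) q ⟨_, CP.NR_of_ne T (hS0 x hx)⟩
    (m := sSup ((fun z : ℂ => ‖q.eval z‖) '' fovW W B)) (fun z hz =>
      le_csSup hbdd ⟨z, hsup hz, rfl⟩)
  have hn : ∀ u : Fin n → ℂ, Real.sqrt ((star u ⬝ᵥ (W *ᵥ u)).re) =
      ‖(WithLp.toLp 2 (S *ᵥ u) : EuclideanSpace ℂ (Fin n))‖ := by
    intro u
    rw [hS, CP.factor_norm, ← Complex.ofReal_pow, Complex.ofReal_re,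
      Real.sqrt_sq (norm_nonneg _)]
  rw [hn, hn]
  have hq : (WithLp.toLp 2 (S *ᵥ (aeval B q *ᵥ x)) : EuclideanSpace ℂ (Fin n)) =
      (aeval T q) (WithLp.toLp 2 (S *ᵥ x)) := by
    rw [hT, Polynomial.aeval_algHom_apply (toEuclideanCLM (n := Fin n) (𝕜 := ℂ)),
      toEuclideanCLM_toLp, mulVec_mulVec, mulVec_mulVec, CP.conj_aeval S B hSu]
  rw [hq]
  exact ((aeval T q).le_opNorm _).trans (mul_le_mul_of_nonneg_right hmain (norm_nonneg _))
end

section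
/- Let N be a skew-Hermitian n×n complex matrix and H an hpd n×n complex matrix. Then for every x ∈ ℂⁿ, the quantity xᴴ H N H x is purely imaginary and satisfies |xᴴ H N H x| ≤ ρ(NH) · (xᴴ H x). -/
open Matrix
open scoped ComplexOrder

section helpers
open scoped MatrixOrder Matrix.Norms.L2Operator

theorem aux_factor {n : ℕ} (H : Matrix (Fin n) (Fin n) ℂ) (hH : H.PosDef) :
    ∃ B : (Matrix (Fin n) (Fin n) ℂ)ˣ,
      H = (B : Matrix (Fin n) (Fin n) ℂ)ᴴ * (B : Matrix (Fin n) (Fin n) ℂ) := by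
  obtain ⟨y, hy⟩ := CStarAlgebra.nonneg_iff_eq_star_mul_self.mp hH.posSemidef.nonneg
  have hu : IsUnit y := by
    have h := hH.isUnit
    rw [hy, Matrix.isUnit_iff_isUnit_det, Matrix.det_mul] at h
    rw [Matrix.isUnit_iff_isUnit_det]
    exact isUnit_of_mul_isUnit_right h
  obtain ⟨B, rfl⟩ := hu
  exact ⟨B, hy⟩

theorem aux_skew_bound {n : ℕ} (K : Matrix (Fin n) (Fin n) ℂ) (hK : Kᴴ = -K)
    (y : Fin n → ℂ) :
    ‖star y ⬝ᵥ (K *ᵥ y)‖ ≤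
      sSup ((fun z : ℂ => ‖z‖) '' spectrum ℂ K) * (star y ⬝ᵥ y).re := by
  rcases n with _ | n
  · simp
  have hn : IsStarNormal K := ⟨by
    rw [star_eq_conjTranspose, hK]; exact (Commute.refl K).neg_left⟩
  obtain ⟨z, hz, hzr⟩ := spectrum.exists_nnnorm_eq_spectralRadius K
  rw [IsStarNormal.spectralRadius_eq_nnnorm] at hzr
  have hzK : ‖z‖ = ‖K‖ := by
    have h := ENNReal.coe_injective hzr
    exact congrArg NNReal.toReal h
  have hle : ‖K‖ ≤ sSup ((fun z : ℂ => ‖z‖) '' spectrum ℂ K) := by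
    rw [← hzK]
    exact le_csSup ((spectrum.isCompact K).image continuous_norm).bddAbove ⟨z, hz, rfl⟩
  have h1 : star y ⬝ᵥ (K *ᵥ y) = inner ℂ (WithLp.toLp 2 y) (WithLp.toLp 2 (K *ᵥ y)) := by
    rw [EuclideanSpace.inner_toLp_toLp, dotProduct_comm]
  have h2 : (star y ⬝ᵥ y).re = ‖WithLp.toLp 2 y‖ * ‖WithLp.toLp 2 y‖ := by
    rw [dotProduct_comm, ← EuclideanSpace.inner_toLp_toLp, ← inner_self_eq_norm_mul_norm (𝕜 := ℂ)]
    rfl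
  have h3 : ‖WithLp.toLp 2 (K *ᵥ y)‖ ≤ ‖K‖ * ‖WithLp.toLp 2 y‖ :=
    K.l2_opNorm_mulVec (WithLp.toLp 2 y)
  rw [h1, h2]
  calc _ ≤ ‖WithLp.toLp 2 y‖ * ‖WithLp.toLp 2 (K *ᵥ y)‖ := norm_inner_le_norm _ _
    _ ≤ ‖WithLp.toLp 2 y‖ * (‖K‖ * ‖WithLp.toLp 2 y‖) := by gcongr
    _ = ‖K‖ * (‖WithLp.toLp 2 y‖ * ‖WithLp.toLp 2 y‖) := by ring
    _ ≤ _ := by gcongr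

theorem aux_skew_re {n : ℕ} (K : Matrix (Fin n) (Fin n) ℂ) (hK : Kᴴ = -K)
    (y : Fin n → ℂ) : (star y ⬝ᵥ (K *ᵥ y)).re = 0 := by
  have h : star (star y ⬝ᵥ (K *ᵥ y)) = -(star y ⬝ᵥ (K *ᵥ y)) := by
    rw [← star_dotProduct_star, star_star, star_mulVec, hK,
      ← dotProduct_mulVec, neg_mulVec, dotProduct_neg]
  have := congrArg Complex.re h
  simp only [Complex.star_def, Complex.conj_re, Complex.neg_re] at this
  linarith

end helpers

/-- For skew-Hermitian `N` and hpd `H`, the quantity `xᴴ H N H x` is purely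
imaginary and `|xᴴ H N H x| ≤ ρ(NH) · xᴴ H x`, where `ρ(NH)` is the spectral radius of
`N * H` (the maximum modulus of its eigenvalues). -/
theorem skew_part_rayleigh_bound {n : ℕ}
    (N H : Matrix (Fin n) (Fin n) ℂ) (hN : Nᴴ = -N) (hH : H.PosDef)
    (x : Fin n → ℂ) :
    (star x ⬝ᵥ ((H * N * H) *ᵥ x)).re = 0 ∧
    ‖star x ⬝ᵥ ((H * N * H) *ᵥ x)‖ ≤
      sSup ((fun z : ℂ => ‖z‖) '' spectrum ℂ (N * H)) * (star x ⬝ᵥ (H *ᵥ x)).re := by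
  obtain ⟨u, hu⟩ := aux_factor H hH
  set B : Matrix (Fin n) (Fin n) ℂ := (u : Matrix (Fin n) (Fin n) ℂ) with hB
  have hK : (B * N * Bᴴ)ᴴ = -(B * N * Bᴴ) := by
    simp [conjTranspose_mul, hN, Matrix.mul_assoc]
  have hs : spectrum ℂ (B * N * Bᴴ) = spectrum ℂ (N * H) := by
    rw [← spectrum.units_conjugate (a := N * H) (u := u), hu, ← hB]
    congr 1
    simp only [Matrix.mul_assoc]
    rw [hB, Units.mul_inv, Matrix.mul_one]
  have e1 : star x ⬝ᵥ ((H * N * H) *ᵥ x) =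
      star (B *ᵥ x) ⬝ᵥ ((B * N * Bᴴ) *ᵥ (B *ᵥ x)) := by
    rw [star_mulVec, ← dotProduct_mulVec, mulVec_mulVec, mulVec_mulVec, hu]
    simp only [Matrix.mul_assoc]
  have e2 : star x ⬝ᵥ (H *ᵥ x) = star (B *ᵥ x) ⬝ᵥ (B *ᵥ x) := by
    rw [star_mulVec, ← dotProduct_mulVec, mulVec_mulVec, hu]
  rw [e1, e2, ← hs]
  exact ⟨aux_skew_re _ hK _, aux_skew_bound _ hK _⟩
end

section
/- Let B be an hpd n×n complex matrix, N a skew-Hermitian n×n complex matrix, and τ ≥ 0. Let (x_k)_{k∈F} be a finite family of vectors such that N x_k = λ_k B x_k with |λ_k| ≤ τ for each k, and such that the family is pairwise B-orthogonal (x_jᴴ B x_k = 0 for j ≠ k). Then for every x in the span of {x_k : k ∈ F}, |xᴴ N x| ≤ τ · (xᴴ B x). -/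
open Matrix
open scoped ComplexOrder

/-- Let `B` be hpd, `N` skew-Hermitian and `τ ≥ 0`. If `(v k)` is a finite
pairwise `B`-orthogonal family of generalized eigenvectors `N (v k) = λ k • B (v k)` with
`|λ k| ≤ τ`, then for every `x` in their span, `|xᴴ N x| ≤ τ · xᴴ B x`. -/
theorem skew_rayleigh_bound_on_deflated_space {n : ℕ}
    (B N : Matrix (Fin n) (Fin n) ℂ) (hB : B.PosDef) (hN : Nᴴ = -N)
    (τ : ℝ) (hτ : 0 ≤ τ) {ι : Type*} [Fintype ι]
    (v : ι → Fin n → ℂ) (lam : ι → ℂ)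
    (heig : ∀ k, N *ᵥ v k = lam k • (B *ᵥ v k))
    (hbound : ∀ k, ‖lam k‖ ≤ τ)
    (horth : ∀ j k, j ≠ k → star (v j) ⬝ᵥ (B *ᵥ v k) = 0)
    (x : Fin n → ℂ) (hx : x ∈ Submodule.span ℂ (Set.range v)) :
    ‖star x ⬝ᵥ (N *ᵥ x)‖ ≤ τ * (star x ⬝ᵥ (B *ᵥ x)).re := by
  classical
  obtain ⟨c, rfl⟩ := (Submodule.mem_span_range_iff_exists_fun ℂ).1 hx
  have key : ∀ (M : Matrix (Fin n) (Fin n) ℂ) (mu : ι → ℂ),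
      (∀ k, M *ᵥ v k = mu k • (B *ᵥ v k)) →
      star (∑ k, c k • v k) ⬝ᵥ (M *ᵥ (∑ k, c k • v k)) =
        ∑ k, mu k * (star (c k • v k) ⬝ᵥ (B *ᵥ (c k • v k))) := by
    intro M mu hM
    rw [Matrix.mulVec_sum, dotProduct_sum]
    refine Finset.sum_congr rfl fun k _ => ?_
    rw [star_sum, sum_dotProduct, Finset.sum_eq_single k]
    · simp only [Matrix.mulVec_smul, hM, dotProduct_smul, smul_eq_mul]
      ring
    · intro j _ hjk
      simp only [Matrix.mulVec_smul, hM, dotProduct_smul, smul_eq_mul, star_smul,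
        smul_dotProduct, horth j k hjk, mul_zero]
    · intro h
      exact absurd (Finset.mem_univ k) h
  rw [key N lam heig, key B (fun _ => 1) (fun k => by simp)]
  simp only [one_mul, Complex.re_sum, Finset.mul_sum]
  refine (norm_sum_le _ _).trans (Finset.sum_le_sum fun k _ => ?_)
  have h0 := hB.posSemidef.dotProduct_mulVec_nonneg (c k • v k)
  rw [norm_mul, ← Complex.re_eq_norm.2 h0]
  exact mul_le_mul_of_nonneg_right (hbound k) (Complex.nonneg_iff.1 h0).1
end

section
/- (Disk bound.) Let μ, ρ be real numbers with 1 ≤ μ ≤ 2ρ² + 1 and ρ ≥ 0, and let Ω := {z ∈ ℂ : 1 ≤ Re z ≤ μ and |Im z| ≤ ρ}. Then for every k ∈ ℕ there exists a polynomial q of degree at most k with q(0) = 1 such that |q(z)| ≤ (ρ/√(1 + ρ²))^k for all z ∈ Ω. Consequently K_k(Ω) ≤ (ρ/√(1 + ρ²))^k. -/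
/-- The GMRES min-max quantity on a set `Ω ⊂ ℂ`:
`K_k(Ω) = inf { sup_{z ∈ Ω} |q(z)| : q polynomial, deg q ≤ k, q(0) = 1 }`. -/
noncomputable def Kminmax (k : ℕ) (Ω : Set ℂ) : ℝ :=
  sInf {r : ℝ | ∃ q : Polynomial ℂ, q.natDegree ≤ k ∧ q.eval 0 = 1 ∧
    r = sSup ((fun z : ℂ => ‖q.eval z‖) '' Ω)}

/-- Disk bound: for the rectangle `Ω = [1, μ] + i[−ρ, ρ]` with
`1 ≤ μ ≤ 2ρ² + 1`, there is a polynomial `q` of degree at most `k` with `q(0) = 1` and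
`|q(z)| ≤ (ρ/√(1+ρ²))^k` on `Ω`; consequently `K_k(Ω) ≤ (ρ/√(1+ρ²))^k`. -/
theorem disk_bound (μ ρ : ℝ) (hμ1 : 1 ≤ μ) (hμ2 : μ ≤ 2 * ρ ^ 2 + 1) (hρ : 0 ≤ ρ)
    (k : ℕ) :
    (∃ q : Polynomial ℂ, q.natDegree ≤ k ∧ q.eval 0 = 1 ∧
      ∀ z : ℂ, 1 ≤ z.re → z.re ≤ μ → |z.im| ≤ ρ →
        ‖q.eval z‖ ≤ (ρ / Real.sqrt (1 + ρ ^ 2)) ^ k) ∧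
    Kminmax k {z : ℂ | 1 ≤ z.re ∧ z.re ≤ μ ∧ |z.im| ≤ ρ} ≤
      (ρ / Real.sqrt (1 + ρ ^ 2)) ^ k := by
  have hex : ∃ q : Polynomial ℂ, q.natDegree ≤ k ∧ q.eval 0 = 1 ∧
      ∀ z : ℂ, 1 ≤ z.re → z.re ≤ μ → |z.im| ≤ ρ →
        ‖q.eval z‖ ≤ (ρ / Real.sqrt (1 + ρ ^ 2)) ^ k := by
    have ha : 0 < 1 + ρ ^ 2 := by positivity
    refine ⟨(Polynomial.C (-((1 + ρ ^ 2 : ℝ) : ℂ)⁻¹) * Polynomial.X + Polynomial.C 1) ^ k,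
      ?_, ?_, ?_⟩
    · refine Polynomial.natDegree_pow_le.trans ?_
      exact (Nat.mul_le_mul_left k Polynomial.natDegree_linear_le).trans (by simp)
    · simp
    · intro z h1 h2 h3
      have hs : 0 < Real.sqrt (1 + ρ ^ 2) := Real.sqrt_pos.mpr ha
      have hss : Real.sqrt (1 + ρ ^ 2) ^ 2 = 1 + ρ ^ 2 := Real.sq_sqrt ha.le
      rw [Polynomial.eval_pow, norm_pow]
      refine pow_le_pow_left₀ (norm_nonneg _) ?_ k
      have hne : ((1 + ρ ^ 2 : ℝ) : ℂ) ≠ 0 := Complex.ofReal_ne_zero.mpr ha.ne'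
      have he : (Polynomial.C (-((1 + ρ ^ 2 : ℝ) : ℂ)⁻¹) * Polynomial.X
          + Polynomial.C 1).eval z
          = (((1 + ρ ^ 2 : ℝ) : ℂ) - z) / ((1 + ρ ^ 2 : ℝ) : ℂ) := by
        simp only [Polynomial.eval_add, Polynomial.eval_mul, Polynomial.eval_C,
          Polynomial.eval_X]
        rw [sub_div, div_self hne, div_eq_mul_inv]
        ring
      rw [he, norm_div, Complex.norm_of_nonneg ha.le, div_le_div_iff₀ ha hs]
      have hn : ‖((1 + ρ ^ 2 : ℝ) : ℂ) - z‖ ^ 2 = (1 + ρ ^ 2 - z.re) ^ 2 + z.im ^ 2 := by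
        rw [Complex.sq_norm, Complex.normSq_apply, Complex.sub_re, Complex.sub_im,
          Complex.ofReal_re, Complex.ofReal_im]
        ring
      have hy : z.im ^ 2 ≤ ρ ^ 2 := sq_le_sq' (abs_le.mp h3).1 (abs_le.mp h3).2
      have hx : (1 + ρ ^ 2 - z.re) ^ 2 ≤ (ρ ^ 2) ^ 2 :=
        sq_le_sq' (by linarith) (by linarith)
      refine (pow_le_pow_iff_left₀ (by positivity) (by positivity) two_ne_zero).mp ?_
      rw [mul_pow, mul_pow, hss, hn]
      calc ((1 + ρ ^ 2 - z.re) ^ 2 + z.im ^ 2) * (1 + ρ ^ 2)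
          ≤ ((ρ ^ 2) ^ 2 + ρ ^ 2) * (1 + ρ ^ 2) := by gcongr
        _ = ρ ^ 2 * (1 + ρ ^ 2) ^ 2 := by ring
  refine ⟨hex, ?_⟩
  obtain ⟨q, hd, h0, hq⟩ := hex
  unfold Kminmax
  refine le_trans (b := sSup ((fun z : ℂ => ‖q.eval z‖) '' {z : ℂ | 1 ≤ z.re ∧ z.re ≤ μ ∧ |z.im| ≤ ρ}))
    (csInf_le ?_ ⟨q, hd, h0, rfl⟩) ?_
  · refine ⟨0, ?_⟩
    rintro r ⟨p, -, -, rfl⟩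
    apply Real.sSup_nonneg
    rintro _ ⟨z, -, rfl⟩
    exact norm_nonneg _
  · apply Real.sSup_le
    · rintro _ ⟨z, ⟨h1, h2, h3⟩, rfl⟩
      exact hq z h1 h2 h3
    · positivity
end

section
/- (Elman bound.) Let μ, ρ be real numbers with μ ≥ 1 and ρ ≥ 0, and let Ω := {z ∈ ℂ : 1 ≤ Re z ≤ μ and |Im z| ≤ ρ}. Then for every k ∈ ℕ there exists a polynomial q of degree at most k with q(0) = 1 such that |q(z)| ≤ (1 − 1/(4(μ² + ρ²)))^{k/2} for all z ∈ Ω. Consequently K_k(Ω) ≤ (1 − 1/(4(μ² + ρ²)))^{k/2}. -/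
/-- Elman bound: for the rectangle `Ω = [1, μ] + i[−ρ, ρ]` with `μ ≥ 1`,
`ρ ≥ 0`, there is a polynomial `q` of degree at most `k` with `q(0) = 1` and
`|q(z)| ≤ (1 − 1/(4(μ² + ρ²)))^{k/2}` on `Ω`; consequently
`K_k(Ω) ≤ (1 − 1/(4(μ² + ρ²)))^{k/2}`. -/
theorem elman_bound (μ ρ : ℝ) (hμ : 1 ≤ μ) (hρ : 0 ≤ ρ) (k : ℕ) :
    (∃ q : Polynomial ℂ, q.natDegree ≤ k ∧ q.eval 0 = 1 ∧
      ∀ z : ℂ, 1 ≤ z.re → z.re ≤ μ → |z.im| ≤ ρ →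
        ‖q.eval z‖ ≤
          (1 - 1 / (4 * (μ ^ 2 + ρ ^ 2))) ^ ((k : ℝ) / 2)) ∧
    Kminmax k {z : ℂ | 1 ≤ z.re ∧ z.re ≤ μ ∧ |z.im| ≤ ρ} ≤
      (1 - 1 / (4 * (μ ^ 2 + ρ ^ 2))) ^ ((k : ℝ) / 2) := by
  have hM : 1 ≤ μ ^ 2 + ρ ^ 2 := by nlinarith [sq_nonneg ρ]
  have hex : ∃ q : Polynomial ℂ, q.natDegree ≤ k ∧ q.eval 0 = 1 ∧
      ∀ z : ℂ, 1 ≤ z.re → z.re ≤ μ → |z.im| ≤ ρ →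
        ‖q.eval z‖ ≤
          (1 - 1 / (4 * (μ ^ 2 + ρ ^ 2))) ^ ((k : ℝ) / 2) := by
    obtain ⟨M, hMdef⟩ : ∃ M, M = μ ^ 2 + ρ ^ 2 := ⟨_, rfl⟩
    rw [← hMdef] at hM ⊢
    obtain ⟨a, ha⟩ : ∃ a : ℝ, a = 1 / M := ⟨_, rfl⟩
    have ha0 : 0 < a := by rw [ha]; positivity
    have haM : a * M = 1 := by rw [ha]; field_simp
    have ha1 : a ≤ 1 := by nlinarith
    have h4 : 1 / (4 * M) = a / 4 := by rw [ha]; field_simp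
    rw [h4]
    refine ⟨(1 - Polynomial.C (a : ℂ) * Polynomial.X) ^ k, ?_, ?_, ?_⟩
    · have h1 : (1 - Polynomial.C (a : ℂ) * Polynomial.X).natDegree ≤ 1 := by
        compute_degree
      calc _ ≤ k * (1 - Polynomial.C (a : ℂ) * Polynomial.X).natDegree :=
            Polynomial.natDegree_pow_le
        _ ≤ k * 1 := Nat.mul_le_mul_left k h1
        _ = k := mul_one k
    · simp
    · intro z h1 h2 h3
      have him : z.im ^ 2 ≤ ρ ^ 2 := sq_le_sq' (abs_le.mp h3).1 (abs_le.mp h3).2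
      have hre : z.re ^ 2 ≤ μ ^ 2 := by nlinarith
      have hsq : ‖(1 : ℂ) - a * z‖ ^ 2 ≤ 1 - a / 4 := by
        rw [← Complex.normSq_eq_norm_sq, Complex.normSq_apply]
        simp
        have e1 : a * (a * (z.re ^ 2 + z.im ^ 2)) ≤ a * (a * M) := by
          rw [hMdef]; gcongr
        rw [haM] at e1
        have e2 : a * 1 ≤ a * z.re := by gcongr
        nlinarith
      have hb : 0 ≤ 1 - a / 4 := by linarith
      have hn : ‖(1 : ℂ) - a * z‖ ≤ (1 - a / 4) ^ ((1 : ℝ) / 2) := by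
        rw [← Real.sqrt_eq_rpow]
        exact Real.le_sqrt_of_sq_le hsq
      have he : (1 - a / 4) ^ ((k : ℝ) / 2) = ((1 - a / 4) ^ ((1 : ℝ) / 2)) ^ k := by
        rw [← Real.rpow_natCast, ← Real.rpow_mul hb]
        congr 1
        ring
      rw [he]
      simp only [Polynomial.eval_pow, Polynomial.eval_sub, Polynomial.eval_one,
        Polynomial.eval_mul, Polynomial.eval_C, Polynomial.eval_X, norm_pow]
      exact pow_le_pow_left₀ (norm_nonneg _) hn k
  refine ⟨hex, ?_⟩
  obtain ⟨q, hq, hq0, hb⟩ := hex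
  refine le_trans (csInf_le ⟨0, ?_⟩ ⟨q, hq, hq0, rfl⟩) (csSup_le ?_ ?_)
  · rintro r ⟨p, -, -, rfl⟩
    apply Real.sSup_nonneg
    rintro _ ⟨z, -, rfl⟩
    exact norm_nonneg _
  · exact ⟨_, 1, by simpa using ⟨hμ, hρ⟩, rfl⟩
  · rintro _ ⟨z, ⟨h1, h2, h3⟩, rfl⟩
    exact hb z h1 h2 h3
end
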